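/- Suppose σ_n → ∞. Then for every q > 0 we have ‖F_n − Φ‖_{L^q(dt)} = O(σ_n^{−1}), i.e. there is a constant C_q such that (∫_ℝ |F_n(t) − Φ(t)|^q dt)^{1/q} ≤ C_q σ_n^{−1} for all n. -/

import Mathlib

open MeasureTheory ProbabilityTheory Filter
open scoped ENNReal NNReal

noncomputable section

variable {Ω : Type*} [MeasurableSpace Ω] {𝒳 : ℕ → Type*} [∀ j, MeasurableSpace (𝒳 j)]

/-- The σ-algebra generated by `X_0, …, X_j`. -/
def pastSigma (X : ∀ j, Ω → 𝒳 j) (j : ℕ) : MeasurableSpace Ω :=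
  ⨆ i ∈ Finset.range (j + 1), MeasurableSpace.comap (X i) inferInstance

/-- `X` is an inhomogeneous Markov chain (on the probability space `(Ω, μ)`) whose `n`-step
transition probabilities from time `j` are given by the Markov kernels `κ j n`: for every
measurable `Γ`, `ℙ(X_{j+n} ∈ Γ | X_0, …, X_j) = (κ j n) (X j) Γ` a.s. -/
structure IsInhomMarkov (μ : Measure Ω) (X : ∀ j, Ω → 𝒳 j)
    (κ : ∀ j n, Kernel (𝒳 j) (𝒳 (j + n))) : Prop where
  meas : ∀ j, Measurable (X j)
  isMarkovKernel : ∀ j n, IsMarkovKernel (κ j n)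
  cond : ∀ j n (Γ : Set (𝒳 (j + n))), MeasurableSet Γ →
    (μ[(fun ω => Γ.indicator (fun _ => (1 : ℝ)) (X (j + n) ω)) | pastSigma X j])
      =ᵐ[μ] fun ω => (κ j n (X j ω) Γ).toReal

/-- The standard normal distribution function `Φ`. -/
def stdNormalCDF (t : ℝ) : ℝ := (gaussianReal 0 1 (Set.Iic t)).toReal


/-- bounded a.e.-measurable complex random variables -/
def BddRV {O : Type*} {m0 : MeasurableSpace O} (μ : Measure O) (V : O → ℂ) : Prop :=
  AEStronglyMeasurable V μ ∧ ∃ B : ℝ, ∀ᵐ ω ∂μ, ‖V ω‖ ≤ B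

section bdd
variable {O : Type*} {𝒢 m0 : MeasurableSpace O} {μ : Measure O} {U V : O → ℂ}

lemma BddRV.integrable [IsFiniteMeasure μ] (h : BddRV μ V) : Integrable V μ := by
  obtain ⟨h1, B, hB⟩ := h
  exact Integrable.of_bound h1 B hB

lemma BddRV.add (hU : BddRV μ U) (hV : BddRV μ V) : BddRV μ (fun ω => U ω + V ω) := by
  obtain ⟨h1, B, hB⟩ := hU
  obtain ⟨h2, B', hB'⟩ := hV
  refine ⟨h1.add h2, B + B', ?_⟩
  filter_upwards [hB, hB'] with ω a b
  exact (norm_add_le _ _).trans (add_le_add a b)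

lemma BddRV.neg (hU : BddRV μ U) : BddRV μ (fun ω => - U ω) := by
  obtain ⟨h1, B, hB⟩ := hU
  refine ⟨h1.neg, B, ?_⟩
  filter_upwards [hB] with ω a
  simpa using a

lemma BddRV.sub (hU : BddRV μ U) (hV : BddRV μ V) : BddRV μ (fun ω => U ω - V ω) := by
  simpa [sub_eq_add_neg] using hU.add hV.neg

lemma BddRV.mul (hU : BddRV μ U) (hV : BddRV μ V) : BddRV μ (fun ω => U ω * V ω) := by
  obtain ⟨h1, B, hB⟩ := hU
  obtain ⟨h2, B', hB'⟩ := hV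
  refine ⟨h1.mul h2, B * B', ?_⟩
  filter_upwards [hB, hB'] with ω a b
  rw [norm_mul]
  exact mul_le_mul a b (norm_nonneg _) ((norm_nonneg _).trans a)

lemma BddRV.const (c : ℂ) : BddRV μ (fun _ => c) :=
  ⟨aestronglyMeasurable_const, ‖c‖, by simp⟩

lemma BddRV.exp (hU : BddRV μ U) : BddRV μ (fun ω => Complex.exp (U ω)) := by
  obtain ⟨h1, B, hB⟩ := hU
  refine ⟨Complex.continuous_exp.comp_aestronglyMeasurable h1, Real.exp B, ?_⟩
  filter_upwards [hB] with ω a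
  rw [Complex.norm_exp]
  exact Real.exp_le_exp.2 ((Complex.re_le_norm _).trans a)

lemma BddRV.conj (hU : BddRV μ U) : BddRV μ (fun ω => (starRingEnd ℂ) (U ω)) := by
  obtain ⟨h1, B, hB⟩ := hU
  refine ⟨Complex.continuous_conj.comp_aestronglyMeasurable h1, B, ?_⟩
  filter_upwards [hB] with ω a
  simpa using a

lemma BddRV.sum {ι : Type*} (s : Finset ι) {W : ι → O → ℂ} (h : ∀ i ∈ s, BddRV μ (W i)) :
    BddRV μ (fun ω => ∑ i ∈ s, W i ω) := by
  classical
  induction s using Finset.induction_on with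
  | empty => simpa using BddRV.const (μ := μ) 0
  | insert a s ha ih =>
    simp_rw [Finset.sum_insert ha]
    exact (h a (by simp)).add (ih fun i hi => h i (by simp [hi]))

lemma BddRV.congr (hU : BddRV μ U) (h : U =ᵐ[μ] V) : BddRV μ V := by
  obtain ⟨h1, B, hB⟩ := hU
  refine ⟨h1.congr h, B, ?_⟩
  filter_upwards [hB, h] with ω a b
  rwa [← b]

lemma BddRV.condExp (hU : BddRV μ U) (𝒢 : MeasurableSpace O) : BddRV μ (μ[U|𝒢]) := by
  obtain ⟨h1, B, hB⟩ := hU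
  exact ⟨integrable_condExp.aestronglyMeasurable, B, ae_bdd_norm_condExp_of_ae_bdd_norm hB⟩

lemma BddRV.normsq [IsFiniteMeasure μ] (hU : BddRV μ U) : Integrable (fun ω => ‖U ω‖ ^ 2) μ := by
  obtain ⟨h1, B, hB⟩ := hU
  refine Integrable.of_bound (h1.norm.pow 2) (B ^ 2) ?_
  filter_upwards [hB] with ω a
  rw [Real.norm_of_nonneg (by positivity)]
  gcongr

/-- complex pull-out -/
lemma condExp_mul_left' [IsFiniteMeasure μ]
    (hU : AEStronglyMeasurable[𝒢] U μ) (bU : BddRV μ U) (bV : BddRV μ V) :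
    μ[fun ω => U ω * V ω|𝒢] =ᵐ[μ] fun ω => U ω * μ[V|𝒢] ω :=
  condExp_bilin_of_aestronglyMeasurable_left (ContinuousLinearMap.mul ℝ ℂ) hU
    (bU.mul bV).integrable bV.integrable

lemma integral_mul_condExp_zero [IsFiniteMeasure μ] (h𝒢 : 𝒢 ≤ m0)
    (hU : AEStronglyMeasurable[𝒢] U μ) (bU : BddRV μ U) (bV : BddRV μ V)
    (h0 : μ[V|𝒢] =ᵐ[μ] 0) : ∫ ω, U ω * V ω ∂μ = 0 := by
  rw [← integral_condExp h𝒢]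
  rw [integral_congr_ae (condExp_mul_left' hU bU bV)]
  have : (fun ω => U ω * μ[V|𝒢] ω) =ᵐ[μ] 0 := by
    filter_upwards [h0] with ω h
    simp [h]
  rw [integral_congr_ae this]; simp

lemma condExp_ball [IsProbabilityMeasure μ] (h𝒢 : 𝒢 ≤ m0)
    (bV : BddRV μ V) (c : ℂ) (r : ℝ)
    (h : ∀ᵐ ω ∂μ, ‖V ω - c‖ ≤ r) : ∀ᵐ ω ∂μ, ‖μ[V|𝒢] ω - c‖ ≤ r := by
  have h1 := condExp_sub (m := 𝒢) bV.integrable (BddRV.const (μ := μ) c).integrable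
  have h2 : ∀ᵐ ω ∂μ, ‖μ[V - fun _ => c|𝒢] ω‖ ≤ r := ae_bdd_norm_condExp_of_ae_bdd_norm h
  filter_upwards [h1, h2] with ω a b
  rw [a] at b
  simpa [condExp_const h𝒢] using b

/-- Pythagoras for conditional expectations -/
lemma pyth [IsProbabilityMeasure μ] (h𝒢 : 𝒢 ≤ m0)
    (bU : BddRV μ U) (bV : BddRV μ V)
    (hU : AEStronglyMeasurable[𝒢] U μ) (h0 : μ[V|𝒢] =ᵐ[μ] 0) :
    ∫ ω, ‖U ω + V ω‖ ^ 2 ∂μ = ∫ ω, ‖U ω‖ ^ 2 ∂μ + ∫ ω, ‖V ω‖ ^ 2 ∂μ := by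
  have h1 : ∫ ω, (starRingEnd ℂ) (U ω) * V ω ∂μ = 0 :=
    integral_mul_condExp_zero h𝒢 (Complex.continuous_conj.comp_aestronglyMeasurable hU)
      bU.conj bV h0
  have h2 : ∫ ω, ((starRingEnd ℂ) (U ω) * V ω).re ∂μ = 0 := by
    have := integral_re (bU.conj.mul bV).integrable
    simp only [RCLike.re_eq_complex_re] at this
    rw [this, h1]; simp
  have e : ∀ ω, ‖U ω + V ω‖ ^ 2
      = ‖U ω‖ ^ 2 + ‖V ω‖ ^ 2 + 2 * ((starRingEnd ℂ) (U ω) * V ω).re := by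
    intro ω
    rw [Complex.sq_norm, Complex.sq_norm, Complex.sq_norm]
    simp [Complex.normSq_apply]; ring
  simp_rw [e]
  have i3 : Integrable (fun ω => 2 * ((starRingEnd ℂ) (U ω) * V ω).re) μ :=
    ((bU.conj.mul bV).integrable.re).const_mul 2
  have i4 : Integrable (fun ω => ‖U ω‖ ^ 2 + ‖V ω‖ ^ 2) μ := bU.normsq.add bV.normsq
  rw [integral_add i4 i3, integral_add bU.normsq bV.normsq,
    integral_const_mul, h2]
  simp

end bdd

section onestep
variable {O : Type*} {𝒢 m0 : MeasurableSpace O} {μ : Measure O} [IsProbabilityMeasure μ]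

lemma one_step (h𝒢 : 𝒢 ≤ m0) (z lam : ℂ) (h h' d : O → ℂ) (η : ℝ)
    (bh : BddRV μ h) (bh' : BddRV μ h') (bd : BddRV μ d)
    (hzd : ∀ᵐ ω ∂μ, ‖z * d ω‖ ≤ 1) (hd0 : μ[d|𝒢] =ᵐ[μ] 0)
    (hη : η ≤ 1 / 12) (h1 : ∀ᵐ ω ∂μ, ‖h ω - 1‖ ≤ η) (h1' : ∀ᵐ ω ∂μ, ‖h' ω - 1‖ ≤ η)
    (hI : ∫ ω, h ω ∂μ = 1) (hI' : ∫ ω, h' ω ∂μ = 1)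
    (hlam : (fun ω => lam * h' ω) =ᵐ[μ] μ[fun ω => Complex.exp (z * d ω) * h ω|𝒢]) :
    ‖lam - 1‖ ≤ 3 * ‖z‖ ^ 2 * (∫ ω, ‖d ω‖ ^ 2 ∂μ) + (∫ ω, ‖h ω - μ[h|𝒢] ω‖ ^ 2 ∂μ) / 2 ∧
    (∫ ω, ‖h ω - μ[h|𝒢] ω‖ ^ 2 ∂μ) ≤ ∫ ω, ‖h ω - 1‖ ^ 2 ∂μ - ∫ ω, ‖h' ω - 1‖ ^ 2 ∂μ
      + 6 * η * (3 * ‖z‖ ^ 2 * (∫ ω, ‖d ω‖ ^ 2 ∂μ) + (∫ ω, ‖h ω - μ[h|𝒢] ω‖ ^ 2 ∂μ) / 2) ∧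
    (∫ ω, ‖h ω - μ[h|𝒢] ω‖ ^ 2 ∂μ) ≤ ∫ ω, ‖h ω - 1‖ ^ 2 ∂μ := by
  have hη0 : 0 ≤ η := by
    obtain ⟨ω, hω⟩ := h1.exists
    exact (norm_nonneg _).trans hω
  set p := μ[h|𝒢] with hp
  have bp : BddRV μ p := bh.condExp 𝒢
  have mp : AEStronglyMeasurable[𝒢] p μ := stronglyMeasurable_condExp.aestronglyMeasurable
  have be : BddRV μ (fun ω => h ω - p ω) := bh.sub bp
  set s := ∫ ω, ‖d ω‖ ^ 2 ∂μ with hs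
  set e := ∫ ω, ‖h ω - p ω‖ ^ 2 ∂μ with he
  set Q : O → ℂ := fun ω => (Complex.exp (z * d ω) - 1 - z * d ω) * h ω + z * d ω * (h ω - p ω)
    with hQ
  have bzd : BddRV μ (fun ω => z * d ω) := (BddRV.const z).mul bd
  have bexp : BddRV μ (fun ω => Complex.exp (z * d ω)) := bzd.exp
  have bQ : BddRV μ Q :=
    (((bexp.sub (BddRV.const 1)).sub bzd).mul bh).add (bzd.mul be)
  -- L1 bound of Q
  have hQ1 : ∫ ω, ‖Q ω‖ ∂μ ≤ 3 * ‖z‖ ^ 2 * s + e / 2 := by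
    have : ∫ ω, ‖Q ω‖ ∂μ ≤ ∫ ω, (3 * ‖z‖ ^ 2 * ‖d ω‖ ^ 2 + ‖h ω - p ω‖ ^ 2 / 2) ∂μ := by
      refine integral_mono_ae bQ.integrable.norm ((bd.normsq.const_mul _).add
        (be.normsq.div_const 2)) ?_
      filter_upwards [hzd, h1] with ω a b
      have t1 : ‖Complex.exp (z * d ω) - 1 - z * d ω‖ ≤ ‖z * d ω‖ ^ 2 :=
        Complex.norm_exp_sub_one_sub_id_le a
      have t2 : ‖h ω‖ ≤ 2 := by
        have : ‖h ω‖ ≤ ‖h ω - 1‖ + ‖(1:ℂ)‖ := by simpa using norm_add_le (h ω - 1) 1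
        simp at this; linarith
      have t3 : ‖Q ω‖ ≤ ‖z * d ω‖ ^ 2 * 2 + ‖z * d ω‖ * ‖h ω - p ω‖ := by
        refine (norm_add_le _ _).trans ?_
        rw [norm_mul, norm_mul (z * d ω)]
        gcongr
      have t4 : ‖z * d ω‖ = ‖z‖ * ‖d ω‖ := norm_mul _ _
      rw [t4] at t3
      nlinarith [sq_nonneg (‖z‖ * ‖d ω‖ - ‖h ω - p ω‖), sq_nonneg (‖z‖ * ‖d ω‖)]
    refine this.trans (le_of_eq ?_)
    rw [integral_add (bd.normsq.const_mul _) (be.normsq.div_const 2), integral_const_mul,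
      integral_div]
  -- identity
  have hid : μ[fun ω => Complex.exp (z * d ω) * h ω|𝒢] =ᵐ[μ] fun ω => p ω + μ[Q|𝒢] ω := by
    have e0 : (fun ω => Complex.exp (z * d ω) * h ω)
        = (h + Q) + fun ω => (z * p ω) * d ω := by
      funext ω; simp [hQ]; ring
    have bzp : BddRV μ (fun ω => z * p ω) := (BddRV.const z).mul bp
    have e1 := condExp_add (m := 𝒢) (bh.integrable.add bQ.integrable) (bzp.mul bd).integrable
    have e2 := condExp_add (m := 𝒢) bh.integrable bQ.integrable
    have e3 := condExp_mul_left' (𝒢 := 𝒢) (mp.const_mul z) bzp bd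
    rw [e0]
    filter_upwards [e1, e2, e3, hd0] with ω a b c f
    rw [a, Pi.add_apply, b, c, Pi.add_apply, f]
    simp [hp]
  have hIQ : lam - 1 = ∫ ω, Q ω ∂μ := by
    have a1 : ∫ ω, lam * h' ω ∂μ = lam := by rw [integral_const_mul, hI', mul_one]
    rw [integral_congr_ae hlam, integral_congr_ae hid,
      integral_add bp.integrable integrable_condExp, integral_condExp h𝒢, integral_condExp h𝒢,
      hI] at a1
    rw [← a1]; ring
  have hlam1 : ‖lam - 1‖ ≤ 3 * ‖z‖ ^ 2 * s + e / 2 := by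
    rw [hIQ]; exact (norm_integral_le_integral_norm _).trans hQ1
  -- Pythagoras
  have hce : μ[fun ω => h ω - p ω|𝒢] =ᵐ[μ] 0 := by
    have := condExp_sub (m := 𝒢) bh.integrable bp.integrable
    have h2 : μ[p|𝒢] = p := condExp_of_stronglyMeasurable h𝒢 stronglyMeasurable_condExp
      bp.integrable
    filter_upwards [this] with ω a
    have a' : μ[fun ω => h ω - p ω|𝒢] ω = (μ[h|𝒢] - μ[p|𝒢]) ω := a
    rw [a', h2]; simp [hp]
  have hpy : ∫ ω, ‖h ω - 1‖ ^ 2 ∂μ = ∫ ω, ‖p ω - 1‖ ^ 2 ∂μ + e := by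
    have := pyth h𝒢 (bp.sub (BddRV.const 1)) be (mp.sub aestronglyMeasurable_const) hce
    rw [← this]
    congr 1; funext ω; congr 2; ring
  have hp1 : ∀ᵐ ω ∂μ, ‖p ω - 1‖ ≤ η := condExp_ball h𝒢 bh 1 η h1
  refine ⟨hlam1, ?_, ?_⟩
  · have hdiff : ∫ ω, ‖h' ω - p ω‖ ∂μ ≤ 3 * (3 * ‖z‖ ^ 2 * s + e / 2) := by
      have : ∫ ω, ‖h' ω - p ω‖ ∂μ ≤ ∫ ω, (‖μ[Q|𝒢] ω‖ + 2 * ‖lam - 1‖) ∂μ := by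
        refine integral_mono_ae (bh'.sub bp).integrable.norm
          (integrable_condExp.norm.add (integrable_const _)) ?_
        filter_upwards [hlam, hid, h1'] with ω a b c
        rw [b] at a
        have t2 : ‖h' ω‖ ≤ 2 := by
          have : ‖h' ω‖ ≤ ‖h' ω - 1‖ + ‖(1:ℂ)‖ := by simpa using norm_add_le (h' ω - 1) 1
          simp at this; linarith
        have : h' ω - p ω = μ[Q|𝒢] ω - (lam - 1) * h' ω := by
          linear_combination a
        rw [this]
        refine (norm_sub_le _ _).trans ?_
        rw [norm_mul]
        nlinarith [norm_nonneg (lam - 1)]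
      rw [integral_add integrable_condExp.norm (integrable_const _)] at this
      have h3 := integral_norm_condExp_le (μ := μ) (m := 𝒢) Q
      simp at this
      linarith
    have : ∫ ω, ‖h' ω - 1‖ ^ 2 ∂μ - ∫ ω, ‖p ω - 1‖ ^ 2 ∂μ ≤ 2 * η * ∫ ω, ‖h' ω - p ω‖ ∂μ := by
      rw [← integral_sub (bh'.sub (BddRV.const 1)).normsq (bp.sub (BddRV.const 1)).normsq,
        ← integral_const_mul]
      refine integral_mono_ae ((bh'.sub (BddRV.const 1)).normsq.sub
        (bp.sub (BddRV.const 1)).normsq) ((bh'.sub bp).integrable.norm.const_mul _) ?_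
      filter_upwards [h1', hp1] with ω a b
      have t : ‖h' ω - 1‖ ≤ ‖p ω - 1‖ + ‖h' ω - p ω‖ := by
        have := norm_add_le (p ω - 1) (h' ω - p ω)
        simpa using this
      have n1 := norm_nonneg (h' ω - 1)
      have n2 := norm_nonneg (p ω - 1)
      have n3 := norm_nonneg (h' ω - p ω)
      nlinarith
    have h5 : 2 * η * ∫ ω, ‖h' ω - p ω‖ ∂μ ≤ 2 * η * (3 * (3 * ‖z‖ ^ 2 * s + e / 2)) := by gcongr
    linarith
  · have : 0 ≤ ∫ ω, ‖p ω - 1‖ ^ 2 ∂μ := integral_nonneg fun _ => by positivity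
    linarith
end onestep


section multi
variable {O : Type*} {ℱ : ℕ → MeasurableSpace O} {m0 : MeasurableSpace O} {μ : Measure O}
  [IsProbabilityMeasure μ]

lemma multi_step (hle : ∀ j, ℱ j ≤ m0) (n : ℕ) (z : ℂ) (lam : ℕ → ℂ) (h d : ℕ → O → ℂ) (η : ℝ)
    (bh : ∀ j ≤ n, BddRV μ (h j)) (bd : ∀ j < n, BddRV μ (d j))
    (hzd : ∀ j < n, ∀ᵐ ω ∂μ, ‖z * d j ω‖ ≤ 1 / 4) (hd0 : ∀ j < n, μ[d j|ℱ j] =ᵐ[μ] 0)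
    (hη : η ≤ 1 / 12) (h1 : ∀ j ≤ n, ∀ᵐ ω ∂μ, ‖h j ω - 1‖ ≤ η)
    (hI : ∀ j ≤ n, ∫ ω, h j ω ∂μ = 1) (hn : h n =ᵐ[μ] 1)
    (hlam : ∀ j < n, (fun ω => lam j * h j ω) =ᵐ[μ]
      μ[fun ω => Complex.exp (z * d j ω) * h (j + 1) ω|ℱ j]) :
    (∑ j ∈ Finset.range n, ‖lam j - 1‖ ≤ 6 * ‖z‖ ^ 2 *
      ∑ j ∈ Finset.range n, ∫ ω, ‖d j ω‖ ^ 2 ∂μ) ∧ ∀ j < n, ‖lam j - 1‖ ≤ 1 / 2 := by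
  have hη0 : 0 ≤ η := by
    obtain ⟨ω, hω⟩ := (h1 0 (Nat.zero_le _)).exists
    exact (norm_nonneg _).trans hω
  have key := fun j (hj : j < n) => one_step (hle j) z (lam j) (h (j+1)) (h j) (d j) η
    (bh (j+1) hj) (bh j hj.le) (bd j hj) ((hzd j hj).mono fun ω a => a.trans (by norm_num))
    (hd0 j hj) hη (h1 (j+1) hj) (h1 j hj.le) (hI _ hj) (hI _ hj.le) (hlam j hj)
  set s : ℕ → ℝ := fun j => ∫ ω, ‖d j ω‖ ^ 2 ∂μ with hs
  set e : ℕ → ℝ := fun j => ∫ ω, ‖h (j+1) ω - μ[h (j+1)|ℱ j] ω‖ ^ 2 ∂μ with he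
  set a : ℕ → ℝ := fun j => ∫ ω, ‖h j ω - 1‖ ^ 2 ∂μ with ha
  have k1 : ∀ j < n, ‖lam j - 1‖ ≤ 3 * ‖z‖ ^ 2 * s j + e j / 2 := fun j hj => (key j hj).1
  have k2 : ∀ j < n, e j ≤ (a (j+1) - a j) + 6 * η * (3 * ‖z‖ ^ 2 * s j + e j / 2) :=
    fun j hj => (key j hj).2.1
  have k3 : ∀ j < n, e j ≤ a (j + 1) := fun j hj => (key j hj).2.2
  have an : a n = 0 := by
    have : (fun ω => ‖h n ω - 1‖ ^ 2) =ᵐ[μ] 0 := by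
      filter_upwards [hn] with ω hω
      simp [hω]
    simp only [ha]
    rw [integral_congr_ae this]; simp
  have a0 : ∀ j, 0 ≤ a j := fun j => integral_nonneg fun _ => by positivity
  have e0 : ∀ j, 0 ≤ e j := fun j => integral_nonneg fun _ => by positivity
  have s0 : ∀ j, 0 ≤ s j := fun j => integral_nonneg fun _ => by positivity
  have k4 : ∀ j < n, e j ≤ 4/3 * (a (j+1) - a j) + 2 * (‖z‖ ^ 2 * s j) := by
    intro j hj
    have h6 : 6 * η * (3 * ‖z‖ ^ 2 * s j + e j / 2) ≤ 6 * (1/12) * (3 * ‖z‖ ^ 2 * s j + e j / 2) := by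
      have := s0 j; have := e0 j
      gcongr
    linarith [k2 j hj]
  constructor
  · have S1 : ∑ j ∈ Finset.range n, e j ≤ 2 * ‖z‖ ^ 2 * ∑ j ∈ Finset.range n, s j := by
      calc ∑ j ∈ Finset.range n, e j
          ≤ ∑ j ∈ Finset.range n, (4/3 * (a (j+1) - a j) + 2 * (‖z‖ ^ 2 * s j)) :=
            Finset.sum_le_sum fun j hj => k4 j (Finset.mem_range.1 hj)
        _ = 4/3 * (a n - a 0) + 2 * ‖z‖ ^ 2 * ∑ j ∈ Finset.range n, s j := by
            rw [Finset.sum_add_distrib, ← Finset.mul_sum, Finset.sum_range_sub,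
              ← Finset.mul_sum, ← Finset.mul_sum]; ring
        _ ≤ _ := by rw [an]; linarith [a0 0]
    calc ∑ j ∈ Finset.range n, ‖lam j - 1‖
        ≤ ∑ j ∈ Finset.range n, (3 * ‖z‖ ^ 2 * s j + e j / 2) :=
          Finset.sum_le_sum fun j hj => k1 j (Finset.mem_range.1 hj)
      _ = 3 * ‖z‖ ^ 2 * ∑ j ∈ Finset.range n, s j + (∑ j ∈ Finset.range n, e j) / 2 := by
          rw [Finset.sum_add_distrib, ← Finset.mul_sum, Finset.sum_div]
      _ ≤ _ := by
          have : 0 ≤ ‖z‖ ^ 2 * ∑ j ∈ Finset.range n, s j :=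
            mul_nonneg (by positivity) (Finset.sum_nonneg fun j _ => s0 j)
          linarith
  · intro j hj
    have t1 : ‖z‖ ^ 2 * s j ≤ 1 / 16 := by
      simp only [hs]
      rw [← integral_const_mul]
      have : ∫ ω, ‖z‖ ^ 2 * ‖d j ω‖ ^ 2 ∂μ ≤ ∫ ω, (1/16 : ℝ) ∂μ := by
        refine integral_mono_ae ((bd j hj).normsq.const_mul _) (integrable_const _) ?_
        filter_upwards [hzd j hj] with ω hω
        rw [norm_mul] at hω
        have : 0 ≤ ‖z‖ * ‖d j ω‖ := by positivity
        nlinarith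
      simpa using this
    have t2 : a (j+1) ≤ 1/4 := by
      have : a (j+1) ≤ ∫ ω, (1/4 : ℝ) ∂μ := by
        refine integral_mono_ae ((bh (j+1) hj).sub (BddRV.const 1)).normsq (integrable_const _) ?_
        filter_upwards [h1 (j+1) hj] with ω hω
        have : 0 ≤ ‖h (j+1) ω - 1‖ := norm_nonneg _
        nlinarith
      simpa using this
    have := k1 j hj; have := k3 j hj
    linarith

lemma ratio_bound (hmono : Monotone ℱ) (hle : ∀ j, ℱ j ≤ m0) (n : ℕ) (z : ℂ) (d : ℕ → O → ℂ)
    (ε : ℝ) (bd : ∀ j < n, BddRV μ (d j))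
    (md : ∀ j < n, AEStronglyMeasurable[ℱ (j+1)] (d j) μ)
    (hzd : ∀ j < n, ∀ᵐ ω ∂μ, ‖z * d j ω‖ ≤ 1 / 4) (hd0 : ∀ j < n, μ[d j|ℱ j] =ᵐ[μ] 0)
    (hε : ε ≤ 1 / 36)
    (hc : ∀ j ≤ n, ∃ c : ℂ, c ≠ 0 ∧ ∀ᵐ ω ∂μ,
      ‖μ[fun ω => Complex.exp (z * ∑ i ∈ Finset.Ico j n, d i ω)|ℱ j] ω - c‖ ≤ ε * ‖c‖) :
    (∀ j ≤ n, ∫ ω, Complex.exp (z * ∑ i ∈ Finset.Ico j n, d i ω) ∂μ ≠ 0) ∧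
    (∑ j ∈ Finset.range n, ‖(∫ ω, Complex.exp (z * ∑ i ∈ Finset.Ico j n, d i ω) ∂μ) /
        (∫ ω, Complex.exp (z * ∑ i ∈ Finset.Ico (j+1) n, d i ω) ∂μ) - 1‖ ≤ 6 * ‖z‖ ^ 2 *
      ∑ j ∈ Finset.range n, ∫ ω, ‖d j ω‖ ^ 2 ∂μ) ∧
    ∀ j < n, ‖(∫ ω, Complex.exp (z * ∑ i ∈ Finset.Ico j n, d i ω) ∂μ) /
        (∫ ω, Complex.exp (z * ∑ i ∈ Finset.Ico (j+1) n, d i ω) ∂μ) - 1‖ ≤ 1 / 2 := by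
  set W : ℕ → O → ℂ := fun j ω => Complex.exp (z * ∑ i ∈ Finset.Ico j n, d i ω) with hW
  set H : ℕ → O → ℂ := fun j => μ[W j|ℱ j] with hH
  set b : ℕ → ℂ := fun j => ∫ ω, W j ω ∂μ with hb
  have bW : ∀ j, BddRV μ (W j) := fun j =>
    ((BddRV.const z).mul (BddRV.sum _ fun i hi => bd i (Finset.mem_Ico.1 hi).2)).exp
  have bH : ∀ j, BddRV μ (H j) := fun j => (bW j).condExp _
  have iH : ∀ j, ∫ ω, H j ω ∂μ = b j := fun j => integral_condExp (hle j)
  have nb : ∀ j ≤ n, b j ≠ 0 ∧ ∀ᵐ ω ∂μ, ‖H j ω / b j - 1‖ ≤ 1 / 12 := by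
    intro j hj
    obtain ⟨c, hc0, hc1⟩ := hc j hj
    have hc2 : 0 < ‖c‖ := norm_pos_iff.2 hc0
    have hbc : ‖b j - c‖ ≤ ε * ‖c‖ := by
      have : b j - c = ∫ ω, (H j ω - c) ∂μ := by
        rw [integral_sub (bH j).integrable (integrable_const c), iH]; simp
      rw [this]
      simpa using norm_integral_le_of_norm_le_const hc1
    have hbn : ‖c‖ ≤ ‖b j‖ + ε * ‖c‖ := by
      have := norm_sub_le (b j) (b j - c)
      simp at this; linarith
    have hb1 : 35 / 36 * ‖c‖ ≤ ‖b j‖ := by nlinarith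
    have hbp : 0 < ‖b j‖ := by linarith
    have hb0 : b j ≠ 0 := norm_pos_iff.1 hbp
    refine ⟨hb0, ?_⟩
    filter_upwards [hc1] with ω hω
    have : H j ω / b j - 1 = ((H j ω - c) - (b j - c)) / b j := by field_simp; ring
    rw [this, norm_div, div_le_iff₀ hbp]
    have h3 := norm_sub_le (H j ω - c) (b j - c)
    have hω' : ‖H j ω - c‖ ≤ ε * ‖c‖ := hω
    nlinarith
  refine ⟨fun j hj => (nb j hj).1, ?_⟩
  refine multi_step hle n z (fun j => b j / b (j+1)) (fun j ω => H j ω / b j) d (1/12)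
    (fun j _ => ?_) bd hzd hd0 le_rfl (fun j hj => (nb j hj).2) (fun j hj => ?_) ?_ ?_
  · simpa [div_eq_mul_inv] using (bH j).mul (BddRV.const (b j)⁻¹)
  · rw [integral_div, iH, div_self (nb j hj).1]
  · have hWn : W n = fun _ => 1 := by funext ω; simp [hW]
    have hHn : H n = fun _ => 1 := by simp [hH, hWn, condExp_const (hle n)]
    have hbn : b n = 1 := by simp [hb, hWn]
    simp only [hHn, hbn]
    exact Eventually.of_forall fun ω => by simp
  · intro j hj
    have hWj : W j = fun ω => Complex.exp (z * d j ω) * W (j+1) ω := by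
      funext ω
      simp only [hW]
      rw [← Complex.exp_add, Finset.sum_eq_sum_Ico_succ_bot hj]; ring_nf
    have bE : BddRV μ (fun ω => Complex.exp (z * d j ω)) := ((BddRV.const z).mul (bd j hj)).exp
    have mE : AEStronglyMeasurable[ℱ (j+1)] (fun ω => Complex.exp (z * d j ω)) μ :=
      Complex.continuous_exp.comp_aestronglyMeasurable ((md j hj).const_mul z)
    have p1 := condExp_mul_left' (𝒢 := ℱ (j+1)) mE bE (bW (j+1))
    rw [← hWj] at p1
    have p2 : μ[μ[W j|ℱ (j+1)]|ℱ j] =ᵐ[μ] μ[W j|ℱ j] :=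
      condExp_condExp_of_le (hmono (Nat.le_succ j)) (hle _)
    have p3 := condExp_congr_ae (m := ℱ j) p1
    have p4 := condExp_smul (m := ℱ j) (μ := μ) (b (j+1))⁻¹
      (fun ω => Complex.exp (z * d j ω) * H (j+1) ω)
    have p5 : ((b (j+1))⁻¹ • fun ω => Complex.exp (z * d j ω) * H (j+1) ω) =
        fun ω => Complex.exp (z * d j ω) * (H (j+1) ω / b (j+1)) := by
      funext ω; simp [div_eq_mul_inv]; ring
    rw [p5] at p4
    have := (nb j hj.le).1
    filter_upwards [p2, p3, p4] with ω q2 q3 q4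
    rw [q4, Pi.smul_apply, ← hH] at *
    have q5 : H j ω = μ[fun ω => Complex.exp (z * d j ω) * H (j+1) ω|ℱ j] ω := by
      rw [← q3, q2]
    rw [← q5]
    simp; field_simp
end multi


/-- abstract Doeblin/Markov structure -/
structure MixData {O : Type*} {m0 : MeasurableSpace O} (μ : Measure O)
    (ℱ 𝒮 : ℕ → MeasurableSpace O) (n₀ : ℕ) (γ : ℝ) : Prop where
  mono : Monotone ℱ
  le : ∀ j, ℱ j ≤ m0
  sle : ∀ j, 𝒮 j ≤ ℱ (j + 1)
  bot : ℱ 0 = ⊥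
  M1 : ∀ j (V : O → ℂ), AEStronglyMeasurable[𝒮 (j + 1)] V μ → BddRV μ V →
    AEStronglyMeasurable[𝒮 j] (μ[V|ℱ (j + 1)]) μ
  D : ∀ j (V : O → ℂ) (c : ℂ) (r : ℝ), AEStronglyMeasurable[𝒮 (j + n₀)] V μ →
    BddRV μ V → (∀ᵐ ω ∂μ, ‖V ω - c‖ ≤ r) →
    ∃ c' : ℂ, ‖c' - c‖ ≤ γ * r ∧ ∀ᵐ ω ∂μ, ‖μ[V|ℱ j] ω - c'‖ ≤ (1 - γ) * r

section mix
variable {O : Type*} {ℱ 𝒮 : ℕ → MeasurableSpace O} {m0 : MeasurableSpace O} {μ : Measure O}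
  [IsProbabilityMeasure μ] {n₀ : ℕ} {γ : ℝ}

lemma differentiable_mgf {V : O → ℂ} (bV : BddRV μ V) :
    Differentiable ℂ (fun z : ℂ => ∫ ω, Complex.exp (z * V ω) ∂μ) := by
  intro z0
  obtain ⟨hm, B, hB⟩ := bV
  have hm' : ∀ z : ℂ, AEStronglyMeasurable (fun ω => Complex.exp (z * V ω)) μ := fun z =>
    Complex.continuous_exp.comp_aestronglyMeasurable (hm.const_mul z)
  have := hasDerivAt_integral_of_dominated_loc_of_deriv_le (μ := μ) (𝕜 := ℂ)
    (F := fun z ω => Complex.exp (z * V ω)) (F' := fun z ω => Complex.exp (z * V ω) * V ω)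
    (x₀ := z0) (s := Metric.ball z0 1) (bound := fun _ => Real.exp ((‖z0‖ + 1) * B) * B)
    (Metric.ball_mem_nhds z0 one_pos) (Eventually.of_forall hm')
    ?_ ((hm' z0).mul hm) ?_ (integrable_const _) ?_
  · exact this.2.differentiableAt
  · refine Integrable.of_bound (hm' z0) (Real.exp (‖z0‖ * B)) ?_
    filter_upwards [hB] with ω hω
    rw [Complex.norm_exp]
    refine Real.exp_le_exp.2 ((Complex.re_le_norm _).trans ?_)
    rw [norm_mul]; gcongr
  · filter_upwards [hB] with ω hω z hz
    rw [norm_mul, Complex.norm_exp]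
    have hz1 : ‖z‖ ≤ ‖z0‖ + 1 := by
      have := norm_sub_norm_le z z0
      rw [Metric.mem_ball, dist_eq_norm] at hz
      linarith
    have : (z * V ω).re ≤ (‖z0‖ + 1) * B := by
      refine (Complex.re_le_norm _).trans ?_
      rw [norm_mul]; gcongr
    gcongr
  · refine Eventually.of_forall fun ω z _ => ?_
    have := ((hasDerivAt_id z).mul_const (V ω)).cexp
    simpa using this

variable (hM : MixData μ ℱ 𝒮 n₀ γ) (hγ : γ ∈ Set.Ioo (0:ℝ) 1) (n : ℕ) (y : ℕ → O → ℂ) (C : ℝ)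
  (my : ∀ j, AEStronglyMeasurable[𝒮 j] (y j) μ) (hy : ∀ j, ∀ᵐ ω ∂μ, ‖y j ω‖ ≤ C)

include hM my hy in
lemma bddy (j : ℕ) : BddRV μ (y j) := ⟨(my j).mono ((hM.sle j).trans (hM.le _)), C, hy j⟩

/-- conditional tail sum -/
def tailA (μ : Measure O) (ℱ : ℕ → MeasurableSpace O) (n : ℕ) (y : ℕ → O → ℂ) (j : ℕ) : O → ℂ :=
  μ[fun ω => ∑ i ∈ Finset.Ico j n, y i ω|ℱ j]

/-- conditional tail exponential -/
def tailG (μ : Measure O) (ℱ : ℕ → MeasurableSpace O) (n : ℕ) (y : ℕ → O → ℂ) (z : ℂ) (j : ℕ) :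
    O → ℂ :=
  μ[fun ω => Complex.exp (z * ∑ i ∈ Finset.Ico j n, y i ω)|ℱ j]

lemma tailA_end (hle : ∀ j, ℱ j ≤ m0) (j : ℕ) (hj : n ≤ j) : tailA μ ℱ n y j = 0 := by
  simp [tailA, Finset.Ico_eq_empty_of_le hj, condExp_const (hle j)]; rfl

lemma tailG_end (hle : ∀ j, ℱ j ≤ m0) (z : ℂ) (j : ℕ) (hj : n ≤ j) :
    tailG μ ℱ n y z j = fun _ => 1 := by
  simp [tailG, Finset.Ico_eq_empty_of_le hj, condExp_const (hle j)]

include hM my hy in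
lemma bdd_tailSum (j k : ℕ) : BddRV μ (fun ω => ∑ i ∈ Finset.Ico j k, y i ω) :=
  BddRV.sum _ fun i _ => bddy hM y C my hy i

include hM my hy in
lemma bdd_tailExp (z : ℂ) (j k : ℕ) :
    BddRV μ (fun ω => Complex.exp (z * ∑ i ∈ Finset.Ico j k, y i ω)) :=
  ((BddRV.const z).mul (bdd_tailSum hM y C my hy j k)).exp

include hM my hy in
lemma bdd_tailA (j : ℕ) : BddRV μ (tailA μ ℱ n y j) := (bdd_tailSum hM y C my hy j n).condExp _

include hM my hy in
lemma bdd_tailG (z : ℂ) (j : ℕ) : BddRV μ (tailG μ ℱ n y z j) :=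
  (bdd_tailExp hM y C my hy z j n).condExp _

include hM my hy in
lemma meas_block (j k : ℕ) :
    AEStronglyMeasurable[ℱ k] (fun ω => ∑ i ∈ Finset.Ico j k, y i ω) μ := by
  have key : ∀ s : Finset ℕ, (∀ i ∈ s, i < k) →
      AEStronglyMeasurable[ℱ k] (fun ω => ∑ i ∈ s, y i ω) μ := by
    intro s
    induction s using Finset.induction_on with
    | empty => intro _; simpa using aestronglyMeasurable_const
    | insert a s ha ih =>
      intro h
      simp_rw [Finset.sum_insert ha]
      have h1 : AEStronglyMeasurable[ℱ k] (y a) μ :=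
        (my a).mono ((hM.sle a).trans (hM.mono (h a (Finset.mem_insert_self a s))))
      exact h1.add (ih fun i hi => h i (Finset.mem_insert_of_mem hi))
  exact key _ fun i hi => (Finset.mem_Ico.1 hi).2

include hM my hy in
lemma tailA_rec (j k : ℕ) (hjk : j ≤ k) (hk : k ≤ n) :
    tailA μ ℱ n y j =ᵐ[μ] μ[fun ω => (∑ i ∈ Finset.Ico j k, y i ω) + tailA μ ℱ n y k ω|ℱ j] := by
  have b1 := bdd_tailSum hM y C my hy j k
  have b2 := bdd_tailSum hM y C my hy k n
  have e0 : (fun ω => ∑ i ∈ Finset.Ico j n, y i ω) =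
      (fun ω => ∑ i ∈ Finset.Ico j k, y i ω) + fun ω => ∑ i ∈ Finset.Ico k n, y i ω := by
    funext ω
    simp [Finset.sum_Ico_consecutive _ hjk hk]
  have e1 := condExp_add (m := ℱ j) b1.integrable b2.integrable
  have e2 := condExp_add (m := ℱ j) b1.integrable (bdd_tailA hM n y C my hy k).integrable
  have e3 : μ[tailA μ ℱ n y k|ℱ j] =ᵐ[μ] μ[fun ω => ∑ i ∈ Finset.Ico k n, y i ω|ℱ j] :=
    condExp_condExp_of_le (hM.mono hjk) (hM.le _)
  rw [← e0] at e1
  filter_upwards [e1, e2, e3] with ω a b c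
  refine Eq.trans a (Eq.trans ?_ b.symm)
  simp [c]

include hM my hy in
lemma tailG_rec (z : ℂ) (j k : ℕ) (hjk : j ≤ k) (hk : k ≤ n) :
    tailG μ ℱ n y z j =ᵐ[μ]
      μ[fun ω => Complex.exp (z * ∑ i ∈ Finset.Ico j k, y i ω) * tailG μ ℱ n y z k ω|ℱ j] := by
  have b1 := bdd_tailExp hM y C my hy z j k
  have b2 := bdd_tailExp hM y C my hy z k n
  have e0 : (fun ω => Complex.exp (z * ∑ i ∈ Finset.Ico j n, y i ω)) =
      (fun ω => Complex.exp (z * ∑ i ∈ Finset.Ico j k, y i ω) *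
        Complex.exp (z * ∑ i ∈ Finset.Ico k n, y i ω)) := by
    funext ω
    rw [← Complex.exp_add, ← mul_add, Finset.sum_Ico_consecutive _ hjk hk]
  have m1 : AEStronglyMeasurable[ℱ k] (fun ω => Complex.exp (z * ∑ i ∈ Finset.Ico j k, y i ω)) μ :=
    Complex.continuous_exp.comp_aestronglyMeasurable
      ((meas_block hM y C my hy j k).const_mul z)
  have p1 := condExp_mul_left' (𝒢 := ℱ k) m1 b1 b2
  rw [← e0] at p1
  have p2 := condExp_congr_ae (m := ℱ j) p1
  have p3 : μ[μ[fun ω => Complex.exp (z * ∑ i ∈ Finset.Ico j n, y i ω)|ℱ k]|ℱ j] =ᵐ[μ]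
    tailG μ ℱ n y z j := condExp_condExp_of_le (hM.mono hjk) (hM.le _)
  exact p3.symm.trans p2

include hM my hy in
lemma tailA_meas (j : ℕ) : AEStronglyMeasurable[𝒮 j] (tailA μ ℱ n y (j + 1)) μ := by
  induction hk : n - j using Nat.strong_induction_on generalizing j with
  | _ k ih =>
    by_cases h : n ≤ j + 1
    · rw [tailA_end n y hM.le _ h]
      exact aestronglyMeasurable_const
    · push Not at h
      have := tailA_rec hM n y C my hy (j+1) (j+2) (by omega) (by omega)
      refine (hM.M1 j _ ?_ ?_).congr this.symm
      · simp only [Nat.Ico_succ_singleton, Finset.sum_singleton]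
        exact (my (j+1)).add (ih (n - (j+1)) (by omega) (j+1) rfl)
      · exact (bdd_tailSum hM y C my hy _ _).add (bdd_tailA hM n y C my hy _)

include hM my hy in
lemma tailG_meas (z : ℂ) (j : ℕ) : AEStronglyMeasurable[𝒮 j] (tailG μ ℱ n y z (j + 1)) μ := by
  induction hk : n - j using Nat.strong_induction_on generalizing j with
  | _ k ih =>
    by_cases h : n ≤ j + 1
    · rw [tailG_end n y hM.le _ _ h]
      exact aestronglyMeasurable_const
    · push Not at h
      have := tailG_rec hM n y C my hy z (j+1) (j+2) (by omega) (by omega)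
      refine (hM.M1 j _ ?_ ?_).congr this.symm
      · simp only [Nat.Ico_succ_singleton, Finset.sum_singleton]
        exact (Complex.continuous_exp.comp_aestronglyMeasurable
          ((my (j+1)).const_mul z)).mul (ih (n - (j+1)) (by omega) (j+1) rfl)
      · exact (bdd_tailExp hM y C my hy _ _ _).mul (bdd_tailG hM n y C my hy _ _)

include hy in
lemma block_bound (hC : 0 ≤ C) (j k N : ℕ) (hk : k ≤ j + N) :
    ∀ᵐ ω ∂μ, ‖∑ i ∈ Finset.Ico j k, y i ω‖ ≤ C * N := by
  filter_upwards [ae_all_iff.2 hy] with ω h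
  refine (norm_sum_le _ _).trans ((Finset.sum_le_sum fun i _ => h i).trans ?_)
  simp only [Finset.sum_const, Nat.card_Ico, nsmul_eq_mul]
  rw [mul_comm]
  have : ((k - j : ℕ) : ℝ) ≤ N := by exact_mod_cast (by omega)
  gcongr

include hM hγ my hy in
lemma tailA_osc (hC : 0 ≤ C) (j : ℕ) :
    ∃ c : ℂ, ∀ᵐ ω ∂μ, ‖tailA μ ℱ n y j ω - c‖ ≤ C * (n₀ + 1 : ℕ) / γ := by
  have hγ0 := hγ.1
  have hR : C * (n₀ + 1 : ℕ) ≤ C * (n₀ + 1 : ℕ) / γ := by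
    rw [le_div_iff₀ hγ0]
    have : 0 ≤ C * (n₀ + 1 : ℕ) := by positivity
    nlinarith [hγ.2]
  induction hk : n - j using Nat.strong_induction_on generalizing j with
  | _ k ih =>
    by_cases h : n ≤ j + (n₀ + 1)
    · refine ⟨0, ?_⟩
      have := condExp_ball (hM.le j) (bdd_tailSum hM y C my hy j n) 0 (C * (n₀ + 1 : ℕ)) (by
        simpa using block_bound y C hy hC j n (n₀ + 1) h)
      filter_upwards [this] with ω a
      exact a.trans hR
    · push Not at h
      obtain ⟨c, hc⟩ := ih (n - (j + n₀ + 1)) (by omega) (j + n₀ + 1) rfl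
      obtain ⟨c', -, hc'⟩ := hM.D j _ c _ (tailA_meas hM n y C my hy (j + n₀))
        (bdd_tailA hM n y C my hy _) hc
      refine ⟨c', ?_⟩
      have r := tailA_rec hM n y C my hy j (j + n₀ + 1) (by omega) (by omega)
      have b1 := bdd_tailSum hM y C my hy j (j + n₀ + 1)
      have e2 := condExp_add (m := ℱ j) b1.integrable
        (bdd_tailA hM n y C my hy (j + n₀ + 1)).integrable
      have e3 : ∀ᵐ ω ∂μ, ‖μ[fun ω => ∑ i ∈ Finset.Ico j (j + n₀ + 1), y i ω|ℱ j] ω‖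
          ≤ C * (n₀ + 1 : ℕ) :=
        ae_bdd_norm_condExp_of_ae_bdd_norm (block_bound y C hy hC j _ (n₀ + 1) (by omega))
      filter_upwards [r, e2, e3, hc'] with ω a b f g
      have b' := a.trans b
      rw [b', Pi.add_apply, add_sub_assoc]
      refine (norm_add_le _ _).trans ((add_le_add f g).trans (le_of_eq ?_))
      field_simp; ring

include hM hγ my hy in
lemma tailA_bound (hC : 0 ≤ C) (hI : ∀ j, ∫ ω, y j ω ∂μ = 0) (j : ℕ) :
    ∀ᵐ ω ∂μ, ‖tailA μ ℱ n y j ω‖ ≤ 2 * (C * (n₀ + 1 : ℕ) / γ) := by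
  obtain ⟨c, hc⟩ := tailA_osc hM hγ n y C my hy hC j
  have bA := bdd_tailA hM n y C my hy j
  have i0 : ∫ ω, tailA μ ℱ n y j ω ∂μ = 0 := by
    unfold tailA
    rw [integral_condExp (hM.le j), integral_finsetSum]
    · simp [hI]
    · exact fun i _ => (bddy hM y C my hy i).integrable
  have hc0 : ‖c‖ ≤ C * (n₀ + 1 : ℕ) / γ := by
    have : -c = ∫ ω, (tailA μ ℱ n y j ω - c) ∂μ := by
      rw [integral_sub bA.integrable (integrable_const c), i0]; simp
    rw [← norm_neg, this]
    simpa using norm_integral_le_of_norm_le_const hc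
  filter_upwards [hc] with ω a
  have := norm_add_le (tailA μ ℱ n y j ω - c) c
  rw [sub_add_cancel] at this
  linarith

include hM hγ my hy in
lemma tailG_osc (hC : 0 ≤ C) (z : ℂ) (ε : ℝ) (hε : ε = 4 * ‖z‖ * (C * (n₀ + 1 : ℕ) / γ))
    (hε4 : ε ≤ 1 / 4) (j : ℕ) :
    ∃ c : ℂ, c ≠ 0 ∧ ∀ᵐ ω ∂μ, ‖tailG μ ℱ n y z j ω - c‖ ≤ ε * ‖c‖ := by
  have hγ0 := hγ.1
  have hγ1 := hγ.2
  have hκ : 2 * (‖z‖ * (C * (n₀ + 1 : ℕ))) = γ * ε / 2 := by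
    rw [hε]; field_simp; ring
  have hε0 : 0 ≤ ε := by rw [hε]; positivity
  have hb : ∀ (j k : ℕ), k ≤ j + (n₀ + 1) → ∀ᵐ ω ∂μ,
      ‖Complex.exp (z * ∑ i ∈ Finset.Ico j k, y i ω) - 1‖ ≤ γ * ε / 2 := by
    intro j k h
    filter_upwards [block_bound y C hy hC j k (n₀ + 1) h] with ω a
    have h1 : ‖z * ∑ i ∈ Finset.Ico j k, y i ω‖ ≤ ‖z‖ * (C * (n₀ + 1 : ℕ)) := by
      rw [norm_mul]; gcongr
    have h2 : ‖z * ∑ i ∈ Finset.Ico j k, y i ω‖ ≤ 1 := by nlinarith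
    refine (Complex.norm_exp_sub_one_le h2).trans ?_
    linarith
  induction hk : n - j using Nat.strong_induction_on generalizing j with
  | _ k ih =>
    by_cases h : n ≤ j + (n₀ + 1)
    · refine ⟨1, one_ne_zero, ?_⟩
      have := condExp_ball (hM.le j) (bdd_tailExp hM y C my hy z j n) 1 _ (hb j n h)
      filter_upwards [this] with ω a
      refine a.trans ?_
      simp; nlinarith
    · push Not at h
      obtain ⟨c, hc0, hc⟩ := ih (n - (j + n₀ + 1)) (by omega) (j + n₀ + 1) rfl
      have bG := bdd_tailG hM n y C my hy z (j + n₀ + 1)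
      obtain ⟨c', hcc, hc'⟩ := hM.D j _ c _ (tailG_meas hM n y C my hy z (j + n₀)) bG hc
      have hcp : 0 < ‖c‖ := norm_pos_iff.2 hc0
      have hcn : (1 - γ * ε) * ‖c‖ ≤ ‖c'‖ := by
        have := norm_sub_norm_le c c'
        rw [norm_sub_rev] at this
        nlinarith
      have hge : γ * ε ≤ 1 / 4 := by nlinarith
      have hc'p : 0 < ‖c'‖ := by nlinarith
      refine ⟨c', norm_pos_iff.1 hc'p, ?_⟩
      have r := tailG_rec hM n y C my hy z j (j + n₀ + 1) (by omega) (by omega)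
      have bE := bdd_tailExp hM y C my hy z j (j + n₀ + 1)
      have bd := (bE.mul bG).sub bG
      have e2 := condExp_sub (m := ℱ j) (bE.mul bG).integrable bG.integrable
      have e3 : ∀ᵐ ω ∂μ, ‖μ[(fun ω => Complex.exp (z * ∑ i ∈ Finset.Ico j (j + n₀ + 1), y i ω) *
          tailG μ ℱ n y z (j + n₀ + 1) ω) - tailG μ ℱ n y z (j + n₀ + 1)|ℱ j] ω‖
          ≤ γ * ε / 2 * ((1 + ε) * ‖c‖) := by
        refine ae_bdd_norm_condExp_of_ae_bdd_norm ?_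
        filter_upwards [hb j (j + n₀ + 1) (by omega), hc] with ω p q
        have q' : ‖tailG μ ℱ n y z (j + n₀ + 1) ω‖ ≤ (1 + ε) * ‖c‖ := by
          have := norm_add_le (tailG μ ℱ n y z (j + n₀ + 1) ω - c) c
          rw [sub_add_cancel] at this
          linarith
        have : (Complex.exp (z * ∑ i ∈ Finset.Ico j (j + n₀ + 1), y i ω) *
          tailG μ ℱ n y z (j + n₀ + 1) ω) - tailG μ ℱ n y z (j + n₀ + 1) ω =
          (Complex.exp (z * ∑ i ∈ Finset.Ico j (j + n₀ + 1), y i ω) - 1) *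
            tailG μ ℱ n y z (j + n₀ + 1) ω := by ring
        simp only [Pi.sub_apply]
        rw [this, norm_mul]
        gcongr
      filter_upwards [r, e2, e3, hc'] with ω a b f g
      rw [b, Pi.sub_apply, ← a] at f
      have := norm_add_le (tailG μ ℱ n y z j ω - μ[tailG μ ℱ n y z (j + n₀ + 1)|ℱ j] ω)
        (μ[tailG μ ℱ n y z (j + n₀ + 1)|ℱ j] ω - c')
      rw [sub_add_sub_cancel] at this
      have t1 : γ * ε / 2 * ((1 + ε) * ‖c‖) + (1 - γ) * (ε * ‖c‖) ≤ ε * ((1 - γ * ε) * ‖c‖) := by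
        have : 0 ≤ γ * ε * ‖c‖ := by positivity
        nlinarith
      have t2 : ε * ((1 - γ * ε) * ‖c‖) ≤ ε * ‖c'‖ := by gcongr
      linarith
end mix

section partA
variable {O : Type*} {ℱ 𝒮 : ℕ → MeasurableSpace O} {m0 : MeasurableSpace O} {μ : Measure O}
  [IsProbabilityMeasure μ] {n₀ : ℕ} {γ : ℝ}

/-- martingale differences -/
def mdd (μ : Measure O) (ℱ : ℕ → MeasurableSpace O) (n : ℕ) (y : ℕ → O → ℂ) (j : ℕ) : O → ℂ :=
  fun ω => (y j ω + tailA μ ℱ n y (j + 1) ω) - tailA μ ℱ n y j ω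

lemma mdd_sum (hle : ∀ j, ℱ j ≤ m0) (n : ℕ) (y : ℕ → O → ℂ) (j : ℕ) (hj : j ≤ n) (ω : O) :
    ∑ i ∈ Finset.Ico j n, mdd μ ℱ n y i ω = ∑ i ∈ Finset.Ico j n, y i ω - tailA μ ℱ n y j ω := by
  have h1 : ∀ i, mdd μ ℱ n y i ω = y i ω + (tailA μ ℱ n y (i + 1) ω - tailA μ ℱ n y i ω) := by
    intro i; simp only [mdd]; ring
  simp_rw [h1]
  rw [Finset.sum_add_distrib, Finset.sum_Ico_sub (fun i => tailA μ ℱ n y i ω) hj,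
    tailA_end n y hle n le_rfl]
  simp; ring

variable (hM : MixData μ ℱ 𝒮 n₀ γ) (hγ : γ ∈ Set.Ioo (0:ℝ) 1) (n : ℕ) (y : ℕ → O → ℂ) (C : ℝ)
  (my : ∀ j, AEStronglyMeasurable[𝒮 j] (y j) μ) (hy : ∀ j, ∀ᵐ ω ∂μ, ‖y j ω‖ ≤ C)

include hM my hy in
lemma mdd_bdd (j : ℕ) : BddRV μ (mdd μ ℱ n y j) :=
  ((bddy hM y C my hy j).add (bdd_tailA hM n y C my hy (j+1))).sub (bdd_tailA hM n y C my hy j)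

include hM my in
lemma mdd_meas (j : ℕ) : AEStronglyMeasurable[ℱ (j+1)] (mdd μ ℱ n y j) μ := by
  have h1 : AEStronglyMeasurable[ℱ (j+1)] (y j) μ := (my j).mono (hM.sle j)
  have h2 : AEStronglyMeasurable[ℱ (j+1)] (tailA μ ℱ n y (j+1)) μ :=
    stronglyMeasurable_condExp.aestronglyMeasurable
  have h3 : AEStronglyMeasurable[ℱ (j+1)] (tailA μ ℱ n y j) μ :=
    (stronglyMeasurable_condExp.aestronglyMeasurable (m := ℱ j)).mono (hM.mono (Nat.le_succ j))
  exact (h1.add h2).sub h3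

include hM my hy in
lemma mdd_zero (j : ℕ) (hj : j < n) : μ[mdd μ ℱ n y j|ℱ j] =ᵐ[μ] 0 := by
  have b1 := (bddy hM y C my hy j).add (bdd_tailA hM n y C my hy (j+1))
  have b2 := bdd_tailA hM n y C my hy j
  have h1 := condExp_sub (m := ℱ j) b1.integrable b2.integrable
  have h2 := tailA_rec hM n y C my hy j (j+1) (Nat.le_succ j) hj
  simp only [Nat.Ico_succ_singleton, Finset.sum_singleton] at h2
  have h3 : μ[tailA μ ℱ n y j|ℱ j] = tailA μ ℱ n y j :=
    condExp_of_stronglyMeasurable (hM.le j) stronglyMeasurable_condExp b2.integrable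
  rw [h3] at h1
  refine EventuallyEq.trans h1 ?_
  filter_upwards [h2] with ω a
  simp only [Pi.sub_apply, Pi.zero_apply]
  rw [a, sub_self]

include hM hγ my hy in
lemma mdd_bound (hC : 0 ≤ C) (hI : ∀ j, ∫ ω, y j ω ∂μ = 0) (j : ℕ) :
    ∀ᵐ ω ∂μ, ‖mdd μ ℱ n y j ω‖ ≤ 5 * (C * (n₀ + 1 : ℕ) / γ) := by
  have hCR : C ≤ C * (n₀ + 1 : ℕ) / γ := by
    rw [le_div_iff₀ hγ.1]
    have : (1:ℝ) ≤ (n₀ + 1 : ℕ) := by norm_cast; omega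
    nlinarith [hγ.2, hγ.1]
  filter_upwards [hy j, tailA_bound hM hγ n y C my hy hC hI j,
    tailA_bound hM hγ n y C my hy hC hI (j+1)] with ω a b c
  have h1 := norm_sub_le (y j ω + tailA μ ℱ n y (j + 1) ω) (tailA μ ℱ n y j ω)
  have h2 := norm_add_le (y j ω) (tailA μ ℱ n y (j + 1) ω)
  simp only [mdd]
  linarith

include hM hγ my hy in
lemma mdd_osc (hC : 0 ≤ C) (hI : ∀ j, ∫ ω, y j ω ∂μ = 0) (z : ℂ)
    (hz : ‖z‖ * (C * (n₀ + 1 : ℕ) / γ) ≤ 1 / 432) (j : ℕ) (hj : j ≤ n) :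
    ∃ c : ℂ, c ≠ 0 ∧ ∀ᵐ ω ∂μ,
      ‖μ[fun ω => Complex.exp (z * ∑ i ∈ Finset.Ico j n, mdd μ ℱ n y i ω)|ℱ j] ω - c‖
        ≤ 1 / 36 * ‖c‖ := by
  set R := C * (n₀ + 1 : ℕ) / γ with hR
  obtain ⟨c, hc0, hc⟩ := tailG_osc hM hγ n y C my hy hC z (4 * ‖z‖ * R) rfl (by linarith) j
  refine ⟨c, hc0, ?_⟩
  have e0 : (fun ω => Complex.exp (z * ∑ i ∈ Finset.Ico j n, mdd μ ℱ n y i ω)) =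
      fun ω => Complex.exp (z * (- tailA μ ℱ n y j ω)) *
        Complex.exp (z * ∑ i ∈ Finset.Ico j n, y i ω) := by
    funext ω
    rw [mdd_sum hM.le n y j hj, ← Complex.exp_add]
    congr 1; ring
  have m1 : AEStronglyMeasurable[ℱ j] (fun ω => Complex.exp (z * (- tailA μ ℱ n y j ω))) μ := by
    have : AEStronglyMeasurable[ℱ j] (tailA μ ℱ n y j) μ :=
      stronglyMeasurable_condExp.aestronglyMeasurable
    exact Complex.continuous_exp.comp_aestronglyMeasurable (this.neg.const_mul z)
  have b1 : BddRV μ (fun ω => Complex.exp (z * (- tailA μ ℱ n y j ω))) :=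
    ((BddRV.const z).mul (bdd_tailA hM n y C my hy j).neg).exp
  have h1 := condExp_mul_left' (𝒢 := ℱ j) m1 b1 (bdd_tailExp hM y C my hy z j n)
  rw [e0]
  filter_upwards [h1, hc, tailA_bound hM hγ n y C my hy hC hI j] with ω a b A
  rw [a]
  change ‖Complex.exp (z * (- tailA μ ℱ n y j ω)) * tailG μ ℱ n y z j ω - c‖ ≤ _
  set A0 := tailA μ ℱ n y j ω
  set G := tailG μ ℱ n y z j ω
  have hzA : ‖z * (-A0)‖ ≤ 2 * (‖z‖ * R) := by
    rw [norm_mul, norm_neg]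
    have := mul_le_mul_of_nonneg_left A (norm_nonneg z)
    linarith
  have h2 := Complex.norm_exp_sub_one_le (x := z * (-A0)) (by linarith)
  have h3 : ‖G‖ ≤ ‖c‖ + 4 * ‖z‖ * R * ‖c‖ := by
    have := norm_sub_norm_le G c
    linarith
  have h4 : Complex.exp (z * (-A0)) * G - c = (Complex.exp (z * (-A0)) - 1) * G + (G - c) := by ring
  rw [h4]
  have h5 := norm_add_le ((Complex.exp (z * (-A0)) - 1) * G) (G - c)
  rw [norm_mul] at h5
  have hc1 := norm_nonneg c
  have hzR : 0 ≤ ‖z‖ * R := by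
    have := hγ.1
    rw [hR]; positivity
  have h6 : ‖Complex.exp (z * (-A0)) - 1‖ * ‖G‖ ≤ (4 * (‖z‖ * R)) * (2 * ‖c‖) := by
    apply mul_le_mul (by linarith) _ (norm_nonneg _) (by linarith)
    nlinarith
  nlinarith

include hM my hy in
lemma mdd_var (hI : ∀ j, ∫ ω, y j ω ∂μ = 0) :
    ∑ j ∈ Finset.range n, ∫ ω, ‖mdd μ ℱ n y j ω‖ ^ 2 ∂μ =
      ∫ ω, ‖∑ i ∈ Finset.range n, y i ω‖ ^ 2 ∂μ := by
  have key : ∀ k ≤ n, AEStronglyMeasurable[ℱ k] (fun ω => ∑ i ∈ Finset.range k, mdd μ ℱ n y i ω) μ ∧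
      ∑ j ∈ Finset.range k, ∫ ω, ‖mdd μ ℱ n y j ω‖ ^ 2 ∂μ =
      ∫ ω, ‖∑ i ∈ Finset.range k, mdd μ ℱ n y i ω‖ ^ 2 ∂μ := by
    intro k hk
    induction k with
    | zero => exact ⟨by simpa using aestronglyMeasurable_const, by simp⟩
    | succ k ih =>
      obtain ⟨i1, i2⟩ := ih (by omega)
      have i3 : AEStronglyMeasurable[ℱ (k+1)] (fun ω => ∑ i ∈ Finset.range k, mdd μ ℱ n y i ω) μ :=
        i1.mono (hM.mono (Nat.le_succ k))
      refine ⟨?_, ?_⟩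
      · simp_rw [Finset.sum_range_succ]
        exact i3.add (mdd_meas hM n y my k)
      · simp_rw [Finset.sum_range_succ]
        rw [i2, pyth (hM.le k) (BddRV.sum _ fun i _ => mdd_bdd hM n y C my hy i)
          (mdd_bdd hM n y C my hy k) i1 (mdd_zero hM n y C my hy k (by omega))]
  rw [(key n le_rfl).2]
  have hA : tailA μ ℱ n y 0 = fun _ => 0 := by
    unfold tailA
    rw [hM.bot, condExp_bot, integral_finsetSum]
    · simp [hI]
    · exact fun i _ => (bddy hM y C my hy i).integrable
  congr 1
  funext ω
  have := mdd_sum hM.le n y 0 (Nat.zero_le n) ω (μ := μ)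
  rw [hA, Nat.Ico_zero_eq_range] at this
  rw [this, sub_zero]

include hM hγ my hy in
theorem log_mgf (hC : 0 < C) (hI : ∀ j, ∫ ω, y j ω ∂μ = 0) :
    ∃ Λ : ℂ → ℂ, DifferentiableOn ℂ Λ (Metric.ball 0 (1 / (432 * (C * (n₀ + 1 : ℕ) / γ)))) ∧
      ∀ z ∈ Metric.ball (0:ℂ) (1 / (432 * (C * (n₀ + 1 : ℕ) / γ))),
        Complex.exp (Λ z) = ∫ ω, Complex.exp (z * ∑ i ∈ Finset.range n, y i ω) ∂μ ∧
        ‖Λ z‖ ≤ 9 * ‖z‖ ^ 2 * ∫ ω, ‖∑ i ∈ Finset.range n, y i ω‖ ^ 2 ∂μ := by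
  set R := C * (n₀ + 1 : ℕ) / γ with hR
  have hR0 : 0 < R := by have := hγ.1; rw [hR]; positivity
  set b : ℕ → ℂ → ℂ := fun j z => ∫ ω, Complex.exp (z * ∑ i ∈ Finset.Ico j n, mdd μ ℱ n y i ω) ∂μ
    with hb
  have bdiff : ∀ j, Differentiable ℂ (b j) := fun j =>
    differentiable_mgf (BddRV.sum _ fun i _ => mdd_bdd hM n y C my hy i)
  have rb : ∀ z ∈ Metric.ball (0:ℂ) (1 / (432 * R)), (∀ j ≤ n, b j z ≠ 0) ∧
      (∑ j ∈ Finset.range n, ‖b j z / b (j+1) z - 1‖ ≤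
        6 * ‖z‖ ^ 2 * ∑ j ∈ Finset.range n, ∫ ω, ‖mdd μ ℱ n y j ω‖ ^ 2 ∂μ) ∧
      ∀ j < n, ‖b j z / b (j+1) z - 1‖ ≤ 1 / 2 := by
    intro z hz
    rw [mem_ball_zero_iff, lt_div_iff₀ (by positivity)] at hz
    have hz' : ‖z‖ * R ≤ 1 / 432 := by linarith
    refine ratio_bound hM.mono hM.le n z (mdd μ ℱ n y) (1/36)
      (fun j _ => mdd_bdd hM n y C my hy j) (fun j _ => mdd_meas hM n y my j) ?_
      (fun j hj => mdd_zero hM n y C my hy j hj) le_rfl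
      (fun j hj => mdd_osc hM hγ n y C my hy hC.le hI z hz' j hj)
    intro j _
    filter_upwards [mdd_bound hM hγ n y C my hy hC.le hI j] with ω a
    rw [norm_mul]
    have := mul_le_mul_of_nonneg_left a (norm_nonneg z)
    linarith
  have slit : ∀ w : ℂ, ‖w - 1‖ ≤ 1 / 2 → w ∈ Complex.slitPlane := by
    intro w hw
    left
    have := (Complex.abs_re_le_norm (w - 1)).trans hw
    rw [abs_le] at this
    simp at this
    linarith
  refine ⟨fun z => ∑ j ∈ Finset.range n, Complex.log (b j z / b (j+1) z), ?_, ?_⟩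
  · refine DifferentiableOn.fun_sum fun j hj => ?_
    have hj' := Finset.mem_range.1 hj
    refine DifferentiableOn.clog ?_ fun z hz => slit _ ((rb z hz).2.2 j hj')
    exact (bdiff j).differentiableOn.div (bdiff (j+1)).differentiableOn
      fun z hz => (rb z hz).1 (j+1) hj'
  · intro z hz
    obtain ⟨r1, r2, r3⟩ := rb z hz
    constructor
    · rw [Complex.exp_sum]
      have : ∀ j ∈ Finset.range n, Complex.exp (Complex.log (b j z / b (j+1) z)) =
          b j z / b (j+1) z := by
        intro j hj
        have hj' := Finset.mem_range.1 hj
        exact Complex.exp_log (div_ne_zero (r1 j hj'.le) (r1 (j+1) hj'))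
      rw [Finset.prod_congr rfl this]
      have key : ∀ k ≤ n, ∏ j ∈ Finset.range k, b j z / b (j+1) z = b 0 z / b k z := by
        intro k hk
        induction k with
        | zero => simp [div_self (r1 0 hk)]
        | succ k ih =>
          rw [Finset.prod_range_succ, ih (by omega)]
          have := r1 k (by omega)
          have := r1 (k+1) hk
          field_simp
      rw [key n le_rfl]
      have hbn : b n z = 1 := by simp [hb]
      rw [hbn, div_one]
      have hA : tailA μ ℱ n y 0 = fun _ => 0 := by
        unfold tailA
        rw [hM.bot, condExp_bot, integral_finsetSum]
        · simp [hI]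
        · exact fun i _ => (bddy hM y C my hy i).integrable
      simp only [hb]
      congr 1
      funext ω
      rw [mdd_sum hM.le n y 0 (Nat.zero_le n) ω, hA, Nat.Ico_zero_eq_range, sub_zero]
    · rw [mdd_var hM n y C my hy hI] at r2
      refine (norm_sum_le _ _).trans ?_
      have : ∀ j ∈ Finset.range n, ‖Complex.log (b j z / b (j+1) z)‖ ≤
          3 / 2 * ‖b j z / b (j+1) z - 1‖ := by
        intro j hj
        have := Complex.norm_log_one_add_half_le_self (r3 j (Finset.mem_range.1 hj))
        simpa using this
      refine (Finset.sum_le_sum this).trans ?_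
      rw [← Finset.mul_sum]
      linarith
end partA

section cubic
variable {O : Type*} {m0 : MeasurableSpace O} {μ : Measure O} [IsProbabilityMeasure μ]

lemma mgf_taylor {V : O → ℝ} (hV : AEStronglyMeasurable V μ) {B : ℝ} (hB0 : 0 ≤ B)
    (hB : ∀ᵐ ω ∂μ, |V ω| ≤ B) (h0 : ∫ ω, V ω ∂μ = 0) (z : ℂ) (hz : ‖z‖ * B ≤ 1) :
    ‖∫ ω, Complex.exp (z * V ω) ∂μ - 1 - (∫ ω, V ω ^ 2 ∂μ : ℝ) * z ^ 2 / 2‖ ≤ B ^ 3 * ‖z‖ ^ 3 := by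
  have mV : AEStronglyMeasurable (fun ω => (V ω : ℂ)) μ :=
    Complex.continuous_ofReal.comp_aestronglyMeasurable hV
  have bV : BddRV μ (fun ω => (V ω : ℂ)) := ⟨mV, B, by simpa using hB⟩
  have bz : BddRV μ (fun ω => z * (V ω : ℂ)) := (BddRV.const z).mul bV
  have i1 := bz.exp.integrable
  have i2 := bz.integrable
  have b3 : BddRV μ (fun ω => z ^ 2 / 2 * ((V ω : ℂ) * V ω)) := (BddRV.const _).mul (bV.mul bV)
  have i3 := b3.integrable
  have e : ∫ ω, Complex.exp (z * V ω) ∂μ - 1 - (∫ ω, V ω ^ 2 ∂μ : ℝ) * z ^ 2 / 2 =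
      ∫ ω, (Complex.exp (z * V ω) - 1 - z * V ω - z ^ 2 / 2 * ((V ω : ℂ) * V ω)) ∂μ := by
    have j1 : Integrable (fun ω => Complex.exp (z * V ω) - 1) μ := i1.sub (integrable_const _)
    have j2 : Integrable (fun ω => Complex.exp (z * V ω) - 1 - z * V ω) μ := j1.sub i2
    rw [integral_sub j2 i3, integral_sub j1 i2, integral_sub i1 (integrable_const _),
      integral_const_mul, integral_const_mul, integral_complex_ofReal, h0]
    have : ∫ ω, (V ω : ℂ) * V ω ∂μ = ((∫ ω, V ω ^ 2 ∂μ : ℝ) : ℂ) := by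
      rw [← integral_complex_ofReal]; congr 1; funext ω; push_cast; ring
    rw [this]; simp; ring
  rw [e]
  refine (norm_integral_le_of_norm_le_const (C := B ^ 3 * ‖z‖ ^ 3) ?_).trans (by simp)
  filter_upwards [hB] with ω h
  have hx : ‖z * V ω‖ ≤ ‖z‖ * B := by rw [norm_mul]; simp; gcongr
  have := Complex.exp_bound (hx.trans hz) (n := 3) (by norm_num)
  have e2 : Complex.exp (z * V ω) - 1 - z * V ω - z ^ 2 / 2 * ((V ω : ℂ) * V ω) =
    Complex.exp (z * V ω) - ∑ m ∈ Finset.range 3, (z * V ω) ^ m / (m.factorial : ℂ) := by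
    simp [Finset.sum_range_succ, Nat.factorial]; ring
  rw [e2]
  refine this.trans ?_
  have : ‖z * V ω‖ ^ 3 ≤ (‖z‖ * B) ^ 3 := by gcongr
  have h4 : ((Nat.succ 3 : ℕ) : ℝ) * (((Nat.factorial 3 : ℕ) : ℝ) * (3:ℕ))⁻¹ ≤ 1 := by
    norm_num [Nat.factorial]
  calc _ ≤ ‖z * V ω‖ ^ 3 * 1 := by gcongr
    _ ≤ _ := by rw [mul_one]; refine this.trans (le_of_eq (by ring))

lemma cubic_bound {V : O → ℝ} (hV : AEStronglyMeasurable V μ) {B : ℝ}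
    (hB : ∀ᵐ ω ∂μ, |V ω| ≤ B) (h0 : ∫ ω, V ω ∂μ = 0) {δ : ℝ} (Λ : ℂ → ℂ)
    (hd : DifferentiableOn ℂ Λ (Metric.ball 0 δ))
    (hΛ : ∀ z ∈ Metric.ball (0:ℂ) δ, Complex.exp (Λ z) = ∫ ω, Complex.exp (z * V ω) ∂μ ∧
      ‖Λ z‖ ≤ 9 * ‖z‖ ^ 2 * ∫ ω, V ω ^ 2 ∂μ) (z : ℂ) (hz : z ∈ Metric.ball (0:ℂ) δ) :
    ‖Λ z - (∫ ω, V ω ^ 2 ∂μ : ℝ) * z ^ 2 / 2‖ ≤ 10 * (∫ ω, V ω ^ 2 ∂μ) * ‖z‖ ^ 3 / δ := by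
  have hδ : 0 < δ := Metric.nonempty_ball.1 ⟨z, hz⟩
  set v := ∫ ω, V ω ^ 2 ∂μ with hv
  have hv0 : 0 ≤ v := integral_nonneg fun _ => sq_nonneg _
  wlog hB0 : 0 ≤ B generalizing B
  · refine this (B := |B|) ?_ (abs_nonneg _)
    filter_upwards [hB] with ω h using h.trans (le_abs_self B)
  set h : ℂ → ℂ := fun z => Λ z - (v : ℝ) * z ^ 2 / 2 with hh
  have hΛ0 : Λ 0 = 0 := by
    have := (hΛ 0 (by simpa using hδ)).2
    simpa using this
  have hh0 : h 0 = 0 := by simp [hh, hΛ0]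
  have hdiff : DifferentiableOn ℂ h (Metric.ball 0 δ) := by
    refine hd.sub (Differentiable.differentiableOn ?_)
    fun_prop
  have hbd : ∀ w ∈ Metric.ball (0:ℂ) δ, ‖h w‖ ≤ 10 * v * ‖w‖ ^ 2 := by
    intro w hw
    have h1 := norm_sub_le (Λ w) ((v:ℝ) * w ^ 2 / 2)
    have h2 := (hΛ w hw).2
    have h3 : ‖((v:ℝ):ℂ) * w ^ 2 / 2‖ = v * ‖w‖ ^ 2 / 2 := by
      rw [norm_div, norm_mul, norm_pow]; simp [abs_of_nonneg hv0]
    rw [h3] at h1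
    have : 0 ≤ v * ‖w‖ ^ 2 := by positivity
    simp only [hh]
    nlinarith
  have key := Complex.dist_le_mul_div_pow_of_mapsTo_ball_of_isLittleO (f := h) (c := 0)
    (R₁ := δ) (R₂ := 10 * v * δ ^ 2) (n := 2) (z := z) hdiff ?_ ?_ hz
  · rw [hh0, dist_zero_right, dist_zero_right] at key
    refine key.trans (le_of_eq ?_)
    norm_num [div_pow]; field_simp
  · intro w hw
    rw [hh0, mem_closedBall_zero_iff]
    refine (hbd w hw).trans ?_
    rw [mem_ball_zero_iff] at hw
    gcongr
  · rw [hh0]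
    simp only [sub_zero]
    have hO : h =O[nhds 0] (fun w : ℂ => ‖w‖ ^ 3) := by
      refine Asymptotics.IsBigO.of_bound (B ^ 3 + (9 * v) ^ 2) ?_
      have e1 : ∀ᶠ w : ℂ in nhds 0, ‖w‖ < δ := by
        filter_upwards [Metric.ball_mem_nhds (0:ℂ) hδ] with w hw; simpa using hw
      have e2 : ∀ᶠ w : ℂ in nhds 0, ‖w‖ * B < 1 := by
        have : Tendsto (fun w : ℂ => ‖w‖ * B) (nhds 0) (nhds (‖(0:ℂ)‖ * B)) :=
          (continuous_norm.mul continuous_const).tendsto 0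
        exact this.eventually_lt_const (by simp)
      have e3 : ∀ᶠ w : ℂ in nhds 0, 9 * ‖w‖ ^ 2 * v < 1 := by
        have : Tendsto (fun w : ℂ => 9 * ‖w‖ ^ 2 * v) (nhds 0) (nhds (9 * ‖(0:ℂ)‖ ^ 2 * v)) :=
          (Continuous.tendsto (by fun_prop) 0)
        exact this.eventually_lt_const (by simp)
      have e4 : ∀ᶠ w : ℂ in nhds 0, ‖w‖ < 1 := by
        filter_upwards [Metric.ball_mem_nhds (0:ℂ) one_pos] with w hw; simpa using hw
      filter_upwards [e1, e2, e3, e4] with w w1 w2 w3 w4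
      have t1 := mgf_taylor hV hB0 hB h0 w w2.le
      obtain ⟨t2, t3⟩ := hΛ w (by simpa using w1)
      rw [← t2, ← hv] at t1
      have t4 := Complex.norm_exp_sub_one_sub_id_le (t3.trans w3.le)
      have t5 : h w = (Complex.exp (Λ w) - 1 - (v:ℝ) * w ^ 2 / 2) -
          (Complex.exp (Λ w) - 1 - Λ w) := by simp only [hh]; ring
      rw [t5]
      refine (norm_sub_le _ _).trans ?_
      have t6 : ‖Λ w‖ ^ 2 ≤ (9 * v) ^ 2 * ‖w‖ ^ 3 := by
        calc ‖Λ w‖ ^ 2 ≤ (9 * ‖w‖ ^ 2 * v) ^ 2 := by gcongr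
          _ = (9 * v) ^ 2 * ‖w‖ ^ 4 := by ring
          _ ≤ _ := by
            gcongr ?_ * ?_
            exact pow_le_pow_of_le_one (norm_nonneg _) w4.le (by norm_num)
      simp only [norm_pow, norm_norm]
      nlinarith
    refine hO.trans_isLittleO ?_
    exact (Asymptotics.isLittleO_pow_pow (𝕜 := ℝ) (show 2 < 3 by norm_num)).comp_tendsto
      (continuous_norm.tendsto' (0:ℂ) 0 norm_zero)
end cubic


/-- quantitative closeness of the moment generating function to the Gaussian one -/
structure NearG (P : Measure ℝ) (S : ℝ) : Prop where
  prob : IsProbabilityMeasure P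
  expInt : Integrable (fun x => Real.exp x) P
  cf : ∀ z : ℂ, ‖z‖ < S → ∃ r : ℂ, ∫ x : ℝ, Complex.exp (z * x) ∂P = Complex.exp (z ^ 2 / 2 + r) ∧
    ‖r‖ ≤ 10 * ‖z‖ ^ 3 / S

lemma nearG_gauss {S : ℝ} (hS : 0 < S) : NearG (gaussianReal 0 1) S := by
  refine ⟨inferInstance, ?_, ?_⟩
  · simpa using integrable_exp_mul_gaussianReal (μ := 0) (v := 1) 1
  · intro z _
    refine ⟨0, ?_, by simp; positivity⟩
    have := complexMGF_id_gaussianReal (μ := 0) (v := 1) z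
    simpa [complexMGF] using this

/-- the tilted characteristic function -/
def tcf (P : Measure ℝ) (ξ : ℝ) : ℂ := ∫ x : ℝ, Complex.exp ((1 + ξ * Complex.I) * x) ∂P

section
variable {P : Measure ℝ} {S : ℝ}

lemma norm_z (ξ : ℝ) : ‖(1 + ξ * Complex.I : ℂ)‖ ^ 2 = 1 + ξ ^ 2 := by
  rw [← Complex.normSq_eq_norm_sq]; simp [Complex.normSq_apply]; ring

lemma norm_z_le (ξ : ℝ) : ‖(1 + ξ * Complex.I : ℂ)‖ ≤ 1 + |ξ| := by
  refine (norm_add_le _ _).trans ?_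
  simp

lemma tcf_r (h : NearG P S) (hS : 160 ≤ S) (ξ : ℝ) (hξ : |ξ| ≤ S / 160) :
    ∃ r : ℂ, tcf P ξ = Complex.exp ((1 + ξ * Complex.I) ^ 2 / 2 + r) ∧
      ‖r‖ ≤ (1 + ξ ^ 2) / 8 ∧ ‖r‖ ≤ 10 * (1 + ξ ^ 2) ^ 2 / S := by
  have h1 := norm_z_le ξ
  have h2 := norm_z ξ
  set z : ℂ := 1 + ξ * Complex.I
  obtain ⟨r, h3, h4⟩ := h.cf z (by linarith)
  have hz0 := norm_nonneg z
  refine ⟨r, h3, h4.trans ?_, h4.trans ?_⟩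
  · rw [← h2, div_le_iff₀ (by linarith)]
    nlinarith [sq_nonneg ‖z‖]
  · rw [← h2]
    have : 1 ≤ ‖z‖ := by nlinarith [sq_nonneg ξ]
    have : ‖z‖ ^ 3 ≤ (‖z‖ ^ 2) ^ 2 := by
      rw [← pow_mul]; exact pow_le_pow_right₀ this (by norm_num)
    have : 0 < S := by linarith
    gcongr

lemma re_z2 (ξ : ℝ) : ((1 + ξ * Complex.I) ^ 2 / 2 : ℂ).re = (1 - ξ ^ 2) / 2 := by
  have : ((1 + ξ * Complex.I) ^ 2 / 2 : ℂ) = (((1 - ξ ^ 2) / 2 : ℝ) : ℂ) + (ξ : ℝ) * Complex.I := by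
    push_cast; ring_nf; simp; ring
  rw [this, Complex.add_re, Complex.ofReal_re]; simp

lemma tcf_bound (h : NearG P S) (hS : 160 ≤ S) (ξ : ℝ) (hξ : |ξ| ≤ S / 160) :
    ‖tcf P ξ‖ ≤ 2 * Real.exp (-(ξ ^ 2) / 4) := by
  obtain ⟨r, h1, h2, -⟩ := tcf_r h hS ξ hξ
  rw [h1, Complex.norm_exp, Complex.add_re, re_z2]
  have h3 : (2:ℝ) = Real.exp (Real.log 2) := (Real.exp_log (by norm_num)).symm
  rw [h3, ← Real.exp_add, ← h3, Real.exp_le_exp]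
  have := Real.log_two_gt_d9
  have := (Complex.re_le_norm r).trans h2
  nlinarith [sq_nonneg ξ]

lemma tcf_diff (h : NearG P S) (hS : 160 ≤ S) (ξ : ℝ) (hξ : |ξ| ≤ S / 160) :
    ‖tcf P ξ - tcf (gaussianReal 0 1) ξ‖ ≤ 5120 / S * Real.exp (-(ξ ^ 2) / 4) := by
  have hS0 : 0 < S := by linarith
  obtain ⟨r, h1, h2, h3⟩ := tcf_r h hS ξ hξ
  have hg : tcf (gaussianReal 0 1) ξ = Complex.exp ((1 + ξ * Complex.I) ^ 2 / 2) := by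
    have := complexMGF_id_gaussianReal (μ := 0) (v := 1) (1 + ξ * Complex.I)
    simpa [complexMGF, tcf] using this
  rw [h1, hg, Complex.exp_add]
  have e : ∀ a b : ℂ, a * b - a = a * (b - 1) := by intros; ring
  rw [e, norm_mul, Complex.norm_exp, re_z2]
  have h4 : ‖Complex.exp r - 1‖ ≤ ‖r‖ * Real.exp ‖r‖ := by
    have := Complex.norm_exp_sub_sum_le_norm_mul_exp r 1
    simpa using this
  have h5 : (1 + ξ ^ 2) ^ 2 ≤ 128 * Real.exp ((1 + ξ ^ 2) / 8) := by
    have := Real.quadratic_le_exp_of_nonneg (x := (1 + ξ ^ 2) / 8) (by positivity)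
    nlinarith [sq_nonneg ξ]
  have h6 : ‖r‖ * Real.exp ‖r‖ ≤ (10 * (128 * Real.exp ((1 + ξ ^ 2) / 8)) / S) *
      Real.exp ((1 + ξ ^ 2) / 8) := by
    gcongr
    exact h3.trans (by gcongr)
  have h7 : Real.exp ((1 - ξ ^ 2) / 2) * (Real.exp ((1 + ξ ^ 2) / 8) * Real.exp ((1 + ξ ^ 2) / 8))
      ≤ 4 * Real.exp (-(ξ ^ 2) / 4) := by
    rw [← Real.exp_add, ← Real.exp_add]
    have h3 : (4:ℝ) = Real.exp (2 * Real.log 2) := by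
      rw [two_mul, Real.exp_add, Real.exp_log (by norm_num)]; norm_num
    have h8 : 4 * Real.exp (-(ξ ^ 2) / 4) = Real.exp (2 * Real.log 2 + -(ξ ^ 2) / 4) := by
      rw [Real.exp_add, ← h3]
    rw [h8, Real.exp_le_exp]
    have := Real.log_two_gt_d9
    nlinarith [sq_nonneg ξ]
  calc _ ≤ Real.exp ((1 - ξ ^ 2) / 2) * ((10 * (128 * Real.exp ((1 + ξ ^ 2) / 8)) / S) *
      Real.exp ((1 + ξ ^ 2) / 8)) := by gcongr; exact h4.trans h6
    _ = 1280 / S * (Real.exp ((1 - ξ ^ 2) / 2) *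
      (Real.exp ((1 + ξ ^ 2) / 8) * Real.exp ((1 + ξ ^ 2) / 8))) := by ring
    _ ≤ 1280 / S * (4 * Real.exp (-(ξ ^ 2) / 4)) := by gcongr
    _ = _ := by ring

lemma mass_bound (h : NearG P S) (hS : 160 ≤ S) : ∫ x, Real.exp x ∂P ≤ 2 := by
  have h1 := tcf_bound h hS 0 (by simp; linarith)
  have h2 : tcf P 0 = ((∫ x, Real.exp x ∂P : ℝ) : ℂ) := by
    rw [← integral_complex_ofReal]; simp [tcf]
  rw [h2] at h1
  simp at h1
  exact (le_abs_self _).trans h1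
end


/-- Fejer type kernel -/
def kk (x : ℝ) : ℝ := 2 * ∫ s in (0:ℝ)..1, (1 - s) * Real.cos (x * s)

lemma kk_nonneg (x : ℝ) : 0 ≤ kk x := by
  unfold kk
  rcases eq_or_ne x 0 with rfl | hx
  · have : 0 ≤ ∫ s in (0:ℝ)..1, (1 - s) * Real.cos (0 * s) :=
      intervalIntegral.integral_nonneg (by norm_num) (by
        intro u hu; simp; exact hu.2)
    linarith
  · have := intervalIntegral.integral_eq_sub_of_hasDerivAt (a := 0) (b := 1)
      (f := fun s => (1 - s) * Real.sin (x * s) / x - Real.cos (x * s) / x ^ 2)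
      (f' := fun s => (1 - s) * Real.cos (x * s)) (by
        intro s _
        have h1 : HasDerivAt (fun s : ℝ => x * s) x s := by
          simpa using (hasDerivAt_id s).const_mul x
        have h2 := (((hasDerivAt_id s).const_sub 1).mul h1.sin).div_const x
        have h3 := h1.cos.div_const (x ^ 2)
        refine (h2.sub h3).congr_deriv ?_
        simp
        field_simp
        ring) (Continuous.intervalIntegrable (by fun_prop) _ _)
    rw [this]
    simp
    have h1 := Real.cos_le_one x
    have : 0 < x ^ 2 := by positivity
    rw [← one_div]
    gcongr

lemma kk_half (x : ℝ) (hx : |x| ≤ 1) : 1 / 2 ≤ kk x := by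
  unfold kk
  have h : ∫ s in (0:ℝ)..1, (1 - s) * (1/2) ≤ ∫ s in (0:ℝ)..1, (1 - s) * Real.cos (x * s) := by
    refine intervalIntegral.integral_mono_on (by norm_num)
      (Continuous.intervalIntegrable (by fun_prop) _ _)
      (Continuous.intervalIntegrable (by fun_prop) _ _) ?_
    intro s hs
    have h1 := Real.one_sub_sq_div_two_le_cos (x := x * s)
    have h2 : (x * s) ^ 2 ≤ 1 := by
      rw [mul_pow]
      have := sq_abs x
      have a1 : x ^ 2 ≤ 1 := by nlinarith [abs_nonneg x]
      have a2 : s ^ 2 ≤ 1 := by nlinarith [hs.1, hs.2]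
      nlinarith [sq_nonneg s, sq_nonneg x]
    have := hs.2
    exact mul_le_mul_of_nonneg_left (by linarith) (by linarith)
  have h2 : ∫ s in (0:ℝ)..1, (1 - s) * (1/2) = 1 / 4 := by
    rw [intervalIntegral.integral_mul_const, intervalIntegral.integral_sub (by simp) (by simp)]
    simp; norm_num
  linarith

section
variable {P : Measure ℝ} {S : ℝ}

lemma cos_tcf (h : NearG P S) (hS : 160 ≤ S) (u a : ℝ) (hu : |u| ≤ S / 160) :
    ∫ x, Real.exp x * Real.cos (u * (x - a)) ∂P ≤ 2 * Real.exp (-(u ^ 2) / 4) := by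
  have h1 := tcf_bound h hS u hu
  have i1 : Integrable (fun x : ℝ => Complex.exp (-(u * a) * Complex.I) *
      Complex.exp ((1 + u * Complex.I) * x)) P := by
    refine Integrable.mono' h.expInt (by fun_prop) (Eventually.of_forall fun x => ?_)
    rw [← Complex.exp_add, Complex.norm_exp]
    simp
  have h2 : ∫ x, Real.exp x * Real.cos (u * (x - a)) ∂P =
      (Complex.exp (-(u * a) * Complex.I) * tcf P u).re := by
    unfold tcf
    rw [← integral_const_mul]
    change _ = (RCLike.re (∫ x : ℝ, _ ∂P : ℂ) : ℝ)
    rw [← integral_re i1]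
    congr 1
    funext x
    change _ = Complex.re _
    rw [← Complex.exp_add, Complex.exp_re]
    simp
    congr 1; ring
  rw [h2]
  refine (Complex.re_le_norm _).trans ?_
  rw [norm_mul, Complex.norm_exp]
  simpa using h1

lemma conc1 (h : NearG P S) (hS : 160 ≤ S) (a : ℝ) :
    ∫ x in Set.Icc a (a + 160 / S), Real.exp x ∂P ≤ 6000 / S := by
  have := h.prob
  have hS0 : 0 < S := by linarith
  set T := S / 160 with hT
  have hT0 : 0 < T := by positivity
  have hTi : 160 / S = 1 / T := by rw [hT]; field_simp
  have hmeas : Continuous (fun p : ℝ × ℝ =>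
    Real.exp p.1 * ((1 - p.2) * Real.cos (T * (p.1 - a) * p.2))) := by fun_prop
  have hint : Integrable (fun p : ℝ × ℝ =>
      Real.exp p.1 * ((1 - p.2) * Real.cos (T * (p.1 - a) * p.2)))
      (P.prod (volume.restrict (Set.Ioc (0:ℝ) 1))) := by
    have := h.expInt.mul_prod (ν := volume.restrict (Set.Ioc (0:ℝ) 1))
      (g := fun s : ℝ => 1 - s) ((Continuous.integrableOn_Icc (by fun_prop)).mono_set
        Set.Ioc_subset_Icc_self)
    refine this.mono hmeas.aestronglyMeasurable (Eventually.of_forall fun p => ?_)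
    simp only [norm_mul]
    gcongr
    exact mul_le_of_le_one_right (norm_nonneg _) (Real.abs_cos_le_one _)
  have hswap : ∫ x, Real.exp x * kk (T * (x - a)) ∂P =
      2 * ∫ s in Set.Ioc (0:ℝ) 1, (1 - s) * ∫ x, Real.exp x * Real.cos (T * s * (x - a)) ∂P := by
    have e1 : ∫ x, Real.exp x * kk (T * (x - a)) ∂P = 2 * ∫ x, (∫ s in Set.Ioc (0:ℝ) 1,
        Real.exp x * ((1 - s) * Real.cos (T * (x - a) * s))) ∂P := by
      rw [← integral_const_mul]
      congr 1; funext x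
      rw [integral_const_mul]
      unfold kk
      rw [intervalIntegral.integral_of_le (by norm_num)]
      ring
    rw [e1, integral_integral_swap hint]
    congr 2; funext s
    rw [← integral_const_mul]
    congr 1; funext x
    have : T * (x - a) * s = T * s * (x - a) := by ring
    rw [this]; ring
  have hik : Integrable (fun x => Real.exp x * kk (T * (x - a))) P := by
    have := hint.integral_prod_left.const_mul 2
    refine this.congr (Eventually.of_forall fun x => ?_)
    simp only
    rw [integral_const_mul]
    unfold kk
    rw [intervalIntegral.integral_of_le (by norm_num)]
    ring
  have h1 : ∫ x in Set.Icc a (a + 160 / S), Real.exp x ∂P ≤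
      2 * ∫ x, Real.exp x * kk (T * (x - a)) ∂P := by
    rw [← integral_indicator measurableSet_Icc, ← integral_const_mul]
    refine integral_mono (h.expInt.indicator measurableSet_Icc) (hik.const_mul 2) fun x => ?_
    by_cases hx : x ∈ Set.Icc a (a + 160 / S)
    · simp only [Set.indicator_of_mem hx]
      have := kk_half (T * (x - a)) (by
        rw [hTi] at hx
        have h0 : 0 ≤ x - a := by linarith [hx.1]
        rw [abs_of_nonneg (by positivity)]
        have : x - a ≤ 1 / T := by linarith [hx.2]
        calc T * (x - a) ≤ T * (1 / T) := by gcongr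
          _ = 1 := by field_simp)
      nlinarith [Real.exp_pos x]
    · simp only [Set.indicator_of_notMem hx]
      have := kk_nonneg (T * (x - a))
      positivity
  have hgi : Integrable (fun s : ℝ => 2 * Real.exp (-(T ^ 2 / 4) * s ^ 2)) :=
    (integrable_exp_neg_mul_sq (by positivity)).const_mul 2
  have h2 : ∫ s in Set.Ioc (0:ℝ) 1, (1 - s) * ∫ x, Real.exp x * Real.cos (T * s * (x - a)) ∂P ≤
      ∫ s in Set.Ioc (0:ℝ) 1, 2 * Real.exp (-(T ^ 2 / 4) * s ^ 2) := by
    refine setIntegral_mono_on ?_ hgi.integrableOn measurableSet_Ioc ?_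
    · have := hint.integral_prod_right
      refine this.congr (Eventually.of_forall fun s => ?_)
      simp only
      rw [← integral_const_mul]
      congr 1; funext x
      have : T * (x - a) * s = T * s * (x - a) := by ring
      rw [this]; ring
    · intro s hs
      have := cos_tcf h hS (T * s) a (by
        rw [abs_of_nonneg (by have := hs.1; positivity)]
        nlinarith [hs.2])
      have e : -((T * s) ^ 2) / 4 = -(T ^ 2 / 4) * s ^ 2 := by ring
      rw [e] at this
      have := mul_le_mul_of_nonneg_left this (sub_nonneg.2 hs.2)
      refine this.trans ?_
      exact mul_le_of_le_one_left (by positivity) (by linarith [hs.1])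
  have h3 : ∫ s in Set.Ioc (0:ℝ) 1, 2 * Real.exp (-(T ^ 2 / 4) * s ^ 2) ≤ 8 / T := by
    refine (setIntegral_le_integral hgi (Eventually.of_forall fun s => by positivity)).trans ?_
    rw [integral_const_mul, integral_gaussian]
    have : Real.sqrt (Real.pi / (T ^ 2 / 4)) ≤ 4 / T := by
      rw [Real.sqrt_le_left (by positivity)]
      have e : (4 / T) ^ 2 = 4 / (T ^ 2 / 4) := by field_simp
      rw [e]
      gcongr
      exact Real.pi_le_four
    calc _ ≤ 2 * (4 / T) := by gcongr
      _ = _ := by ring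
  have h4 : 8 / T = 1280 / S := by rw [hT]; field_simp; norm_num
  have h5 : 1280 / S * 4 ≤ 6000 / S := by
    rw [div_mul_eq_mul_div]; gcongr; norm_num
  rw [hswap] at h1
  linarith

lemma conc (h : NearG P S) (hS : 160 ≤ S) (a b : ℝ) (hab : a ≤ b) :
    ∫ x in Set.Icc a b, Real.exp x ∂P ≤ 40 * (b - a) + 6000 / S := by
  have := h.prob
  have hS0 : 0 < S := by linarith
  have key : ∀ k : ℕ, ∫ x in Set.Icc a (a + k * (160 / S)), Real.exp x ∂P ≤ k * (6000 / S) ∨ k = 0 := by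
    intro k
    induction k with
    | zero => right; rfl
    | succ k ih =>
      left
      rcases ih with ih | rfl
      · have hsub : Set.Icc a (a + (k + 1 : ℕ) * (160 / S)) ⊆ Set.Icc a (a + k * (160 / S)) ∪
            Set.Icc (a + k * (160 / S)) ((a + k * (160 / S)) + 160 / S) := by
          intro x hx
          rcases le_total x (a + k * (160 / S)) with h1 | h1
          · left; exact ⟨hx.1, h1⟩
          · right; refine ⟨h1, ?_⟩
            have := hx.2
            push_cast at this
            linarith
        have h1 : ∫ x in Set.Icc a (a + (k + 1 : ℕ) * (160 / S)), Real.exp x ∂P ≤ 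
            ∫ x in Set.Icc a (a + k * (160 / S)) ∪
            Set.Icc (a + k * (160 / S)) ((a + k * (160 / S)) + 160 / S), Real.exp x ∂P :=
          setIntegral_mono_set h.expInt.integrableOn
            (Eventually.of_forall fun x => (Real.exp_pos x).le) hsub.eventuallyLE
        have h2 : ∫ x in Set.Icc a (a + k * (160 / S)) ∪
            Set.Icc (a + k * (160 / S)) ((a + k * (160 / S)) + 160 / S), Real.exp x ∂P ≤
            ∫ x in Set.Icc a (a + k * (160 / S)), Real.exp x ∂P + 
            ∫ x in Set.Icc (a + k * (160 / S)) ((a + k * (160 / S)) + 160 / S), Real.exp x ∂P := by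
          rw [← integral_indicator measurableSet_Icc, ← integral_indicator measurableSet_Icc,
            ← integral_indicator (measurableSet_Icc.union measurableSet_Icc), ← integral_add
            (h.expInt.indicator measurableSet_Icc) (h.expInt.indicator measurableSet_Icc)]
          refine integral_mono (h.expInt.indicator (measurableSet_Icc.union measurableSet_Icc))
            ((h.expInt.indicator measurableSet_Icc).add (h.expInt.indicator measurableSet_Icc))
            fun x => ?_
          have := (Real.exp_pos x).le
          simp only [Set.indicator, Set.mem_union]
          split_ifs <;> first | linarith | tauto
        have h3 := conc1 h hS (a + k * (160 / S))
        push_cast at *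
        linarith
      · simpa using conc1 h hS a
  obtain ⟨k, hk⟩ : ∃ k : ℕ, k = ⌈(b - a) * (S / 160)⌉₊ := ⟨_, rfl⟩
  have hk1 : (b - a) * (S / 160) ≤ k := by rw [hk]; exact Nat.le_ceil _
  have hk2 : (k : ℝ) < (b - a) * (S / 160) + 1 := by
    rw [hk]; exact Nat.ceil_lt_add_one (by have := sub_nonneg.2 hab; positivity)
  have e : ∀ x : ℝ, x * (S / 160) * (160 / S) = x := by intro x; field_simp
  have hb : b ≤ a + k * (160 / S) := by
    have : (b - a) * (S / 160) * (160 / S) ≤ k * (160 / S) := by gcongr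
    rw [e] at this; linarith
  have e2 : (b - a) * (S / 160) * (6000 / S) = (b - a) * (6000 / 160) := by field_simp
  have hab' := sub_nonneg.2 hab
  rcases key k with h1 | h1
  · have h2 : ∫ x in Set.Icc a b, Real.exp x ∂P ≤
        ∫ x in Set.Icc a (a + k * (160 / S)), Real.exp x ∂P :=
      setIntegral_mono_set h.expInt.integrableOn
        (Eventually.of_forall fun x => (Real.exp_pos x).le)
        (Set.Icc_subset_Icc_right hb).eventuallyLE
    have h3 : (k : ℝ) * (6000 / S) ≤ ((b - a) * (S / 160) + 1) * (6000 / S) := by gcongr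
    rw [add_mul, e2] at h3
    linarith
  · rw [h1] at hb
    have hle : Set.Icc a b ⊆ Set.Icc a (a + 160 / S) :=
      Set.Icc_subset_Icc_right (by have : 0 < 160 / S := by positivity
                                   simp at hb; linarith)
    have h2 := setIntegral_mono_set (s := Set.Icc a b) (t := Set.Icc a (a + 160 / S))
      (μ := P) h.expInt.integrableOn (Eventually.of_forall fun x => (Real.exp_pos x).le)
        hle.eventuallyLE
    have := conc1 h hS a
    linarith
end


lemma exists_kernel : ∃ ψ K : ℝ → ℂ, Continuous ψ ∧ Integrable ψ ∧ (∀ ξ, ‖ψ ξ‖ ≤ 1) ∧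
    (∀ ξ, 1 ≤ 2 * Real.pi * |ξ| → ψ ξ = 0) ∧
    (∀ y : ℝ, K y = ∫ ξ : ℝ, Complex.exp (((2 * Real.pi * ξ * y : ℝ) : ℂ) * Complex.I) * ψ ξ) ∧
    Integrable K ∧ Integrable (fun y => |y| * ‖K y‖) ∧ ∫ y, K y = 1 := by
  let b : ContDiffBump (0:ℝ) := ⟨1/16, 1/8, by norm_num, by norm_num⟩
  have hcd : ContDiff ℝ (⊤ : ℕ∞) (fun x => ((b x : ℝ) : ℂ)) :=
    Complex.ofRealCLM.contDiff.comp b.contDiff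
  have hcs : HasCompactSupport (fun x => ((b x : ℝ) : ℂ)) :=
    b.hasCompactSupport.comp_left (g := fun x : ℝ => (x : ℂ)) (by simp)
  let ψ : SchwartzMap ℝ ℂ := hcs.toSchwartzMap hcd
  have hψ : ∀ x, ψ x = (b x : ℂ) := fun x => rfl
  let K : SchwartzMap ℝ ℂ := FourierTransformInv.fourierInv ψ
  refine ⟨ψ, K, ψ.continuous, ψ.integrable, ?_, ?_, ?_, K.integrable, ?_, ?_⟩
  · intro ξ
    rw [hψ]
    simp [abs_of_nonneg b.nonneg, b.le_one]
  · intro ξ hξ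
    rw [hψ, b.zero_of_le_dist]; · simp
    change 1/8 ≤ _
    rw [dist_zero_right, Real.norm_eq_abs]
    nlinarith [Real.pi_le_four, Real.pi_pos, abs_nonneg ξ]
  · intro y
    have := Real.fourierInv_eq' (ψ : ℝ → ℂ) y
    change (FourierTransformInv.fourierInv ψ : SchwartzMap ℝ ℂ) y = _
    rw [SchwartzMap.fourierInv_coe, this]
    congr 1; funext ξ
    simp only [smul_eq_mul]
    congr 4
    simp; ring
  · simpa using K.integrable_pow_mul volume 1
  · have h1 : (FourierTransform.fourier K : SchwartzMap ℝ ℂ) = ψ := FourierTransform.fourier_fourierInv_eq ψ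
    have h2 : (FourierTransform.fourier K : SchwartzMap ℝ ℂ) 0 = ∫ y, K y := by
      rw [SchwartzMap.fourier_coe, Real.fourier_eq']
      simp
    rw [← h2, h1, hψ, b.one_of_mem_closedBall]; · simp
    simp [b.rIn_pos.le]

/-- tilted tail -/
def tA (P : Measure ℝ) (t : ℝ) : ℝ := Real.exp t * P.real (Set.Ioi t)

section
variable {P : Measure ℝ} {S : ℝ}

lemma exp_mass [IsProbabilityMeasure P] (hi : Integrable (fun x => Real.exp x) P) (t : ℝ) (s : Set ℝ)
    (hs : MeasurableSet s) (hst : ∀ x ∈ s, t ≤ x) :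
    Real.exp t * P.real s ≤ ∫ x in s, Real.exp x ∂P := by
  have h1 : ∫ x in s, Real.exp t ∂P ≤ ∫ x in s, Real.exp x ∂P :=
    setIntegral_mono_on (integrable_const _).integrableOn hi.integrableOn hs fun x hx =>
      Real.exp_le_exp.2 (hst x hx)
  rw [setIntegral_const, smul_eq_mul] at h1
  linarith

lemma tA_nonneg (t : ℝ) : 0 ≤ tA P t := mul_nonneg (Real.exp_pos _).le measureReal_nonneg

lemma tA_le (h : NearG P S) (hS : 160 ≤ S) (t : ℝ) : tA P t ≤ 2 := by
  have := h.prob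
  have h1 := exp_mass h.expInt t (Set.Ioi t) measurableSet_Ioi fun x hx => le_of_lt hx
  refine h1.trans ((setIntegral_le_integral h.expInt
    (Eventually.of_forall fun x => (Real.exp_pos x).le)).trans (mass_bound h hS))

lemma tA_lip (h : NearG P S) (hS : 160 ≤ S) (t u : ℝ) :
    |tA P t - tA P u| ≤ 42 * |t - u| + 6000 / S := by
  have := h.prob
  wlog htu : t ≤ u generalizing t u
  · rw [abs_sub_comm, abs_sub_comm t]; exact this u t (le_of_not_ge htu)
  have h1 : P.real (Set.Ioi t) = P.real (Set.Ioc t u) + P.real (Set.Ioi u) := by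
    rw [← Set.Ioc_union_Ioi_eq_Ioi htu, measureReal_union _ measurableSet_Ioi]
    rw [Set.disjoint_left]; intro x hx hx'; exact absurd hx.2 (not_le.2 hx')
  have h2 : Real.exp t * P.real (Set.Ioc t u) ≤ 40 * (u - t) + 6000 / S := by
    refine (exp_mass h.expInt t _ measurableSet_Ioc fun x hx => hx.1.le).trans ?_
    refine le_trans ?_ (conc h hS t u htu)
    exact setIntegral_mono_set h.expInt.integrableOn
        (Eventually.of_forall fun x => (Real.exp_pos x).le) Set.Ioc_subset_Icc_self.eventuallyLE
  have h3 : (Real.exp u - Real.exp t) * P.real (Set.Ioi u) ≤ 2 * (u - t) := by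
    have e1 : Real.exp u - Real.exp t ≤ (u - t) * Real.exp u := by
      have := Real.add_one_le_exp (t - u)
      have e : Real.exp t = Real.exp (t - u) * Real.exp u := by rw [← Real.exp_add]; ring_nf
      rw [e]
      nlinarith [Real.exp_pos u]
    calc _ ≤ ((u - t) * Real.exp u) * P.real (Set.Ioi u) := by gcongr
      _ = (u - t) * tA P u := by unfold tA; ring
      _ ≤ (u - t) * 2 := by
        have := tA_le h hS u
        have := sub_nonneg.2 htu
        gcongr
      _ = _ := by ring
  have h4 : 0 ≤ Real.exp t * P.real (Set.Ioc t u) := by positivity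
  have h5 : 0 ≤ (Real.exp u - Real.exp t) * P.real (Set.Ioi u) :=
    mul_nonneg (sub_nonneg.2 (Real.exp_le_exp.2 htu)) measureReal_nonneg
  have h6 : tA P t - tA P u = Real.exp t * P.real (Set.Ioc t u) -
      (Real.exp u - Real.exp t) * P.real (Set.Ioi u) := by
    unfold tA; rw [h1]; ring
  have h7 : 0 < 6000 / S := div_pos (by norm_num) (by linarith)
  rw [h6, abs_sub_comm t u, abs_of_nonneg (sub_nonneg.2 htu), abs_le]
  constructor <;> linarith
end


lemma smooth_inner (ψ K : ℝ → ℂ) (hc : Continuous ψ) (hi : Integrable ψ)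
    (hK : ∀ y : ℝ, K y = ∫ ξ : ℝ, Complex.exp (((2 * Real.pi * ξ * y : ℝ) : ℂ) * Complex.I) * ψ ξ)
    {T : ℝ} (hT : 0 < T) (t x : ℝ) :
    ∫ y, K y * (Set.Iic (T * (x - t))).indicator (fun y => ((Real.exp (t + y / T) : ℝ) : ℂ)) y =
      ∫ ξ : ℝ, ψ ξ * (T / (1 + (2 * Real.pi * T * ξ : ℝ) * Complex.I)) *
        Complex.exp (-(((2 * Real.pi * T * ξ : ℝ) : ℂ) * Complex.I) * t) *
        Complex.exp ((1 + (2 * Real.pi * T * ξ : ℝ) * Complex.I) * x) := by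
  set M := T * (x - t) with hM
  set g : ℝ → ℂ := (Set.Iic M).indicator (fun y => ((Real.exp (t + y / T) : ℝ) : ℂ)) with hg
  have hgi : Integrable g := by
    refine IntegrableOn.integrable_indicator ?_ measurableSet_Iic
    have := ((integrableOn_exp_mul_Iic (a := 1 / T) (by positivity) M).const_mul (Real.exp t)).ofReal (𝕜 := ℂ)
    refine this.congr (Eventually.of_forall fun y => ?_)
    simp only
    rw [← Real.exp_add]
    congr 3; ring
  have hint : Integrable (fun p : ℝ × ℝ => Complex.exp (((2 * Real.pi * p.2 * p.1 : ℝ) : ℂ) *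
      Complex.I) * (g p.1 * ψ p.2)) (volume.prod volume) := by
    refine (hgi.mul_prod hi).bdd_mul (c := 1) ?_ (Eventually.of_forall fun p => ?_)
    · exact Continuous.aestronglyMeasurable (by fun_prop)
    · rw [Complex.norm_exp_ofReal_mul_I]
  calc ∫ y, K y * g y = ∫ y, ∫ ξ : ℝ, Complex.exp (((2 * Real.pi * ξ * y : ℝ) : ℂ) *
      Complex.I) * (g y * ψ ξ) := by
        congr 1; funext y
        rw [hK, ← integral_mul_const]
        congr 1; funext ξ; ring
    _ = ∫ ξ : ℝ, ∫ y, Complex.exp (((2 * Real.pi * ξ * y : ℝ) : ℂ) *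
      Complex.I) * (g y * ψ ξ) := integral_integral_swap hint
    _ = _ := by
      congr 1; funext ξ
      set a : ℂ := 1 / T + (2 * Real.pi * ξ : ℝ) * Complex.I with ha
      have hare : a.re = 1 / T := by rw [ha]; simp
      have ha0 : a ≠ 0 := by
        intro h; rw [h] at hare; simp at hare; exact hT.ne' hare.symm
      have e1 : ∀ y : ℝ, Complex.exp (((2 * Real.pi * ξ * y : ℝ) : ℂ) * Complex.I) * (g y * ψ ξ) =
          (ψ ξ * Complex.exp t) * (Set.Iic M).indicator (fun y : ℝ => Complex.exp (a * y)) y := by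
        intro y
        by_cases hy : y ∈ Set.Iic M
        · simp only [hg, Set.indicator_of_mem hy]
          have : Complex.exp (a * y) = Complex.exp (((2 * Real.pi * ξ * y : ℝ) : ℂ) * Complex.I) *
            Complex.exp (y / T) := by
            rw [← Complex.exp_add, ha]; congr 1; push_cast; ring
          rw [this]; push_cast; rw [Complex.exp_add]; ring
        · simp only [hg, Set.indicator_of_notMem hy]; simp
      simp_rw [e1]
      rw [integral_const_mul, integral_indicator measurableSet_Iic,
        integral_exp_mul_complex_Iic (by rw [hare]; positivity)]
      have hTc : (T : ℂ) ≠ 0 := by exact_mod_cast hT.ne'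
      have e2 : (1 + (2 * Real.pi * T * ξ : ℝ) * Complex.I : ℂ) = T * a := by
        rw [ha]; push_cast; field_simp
      have e3 : (T : ℂ) / (T * a) = 1 / a := by field_simp
      rw [e2, e3]
      have e4 : Complex.exp t * Complex.exp (a * M) =
          Complex.exp (-(((2 * Real.pi * T * ξ : ℝ) : ℂ) * Complex.I) * t) *
            Complex.exp (T * a * x) := by
        rw [← Complex.exp_add, ← Complex.exp_add]
        congr 1
        have : ((2 * Real.pi * T * ξ : ℝ) * Complex.I : ℂ) = T * a - 1 := by rw [← e2]; ring
        rw [this, hM]; push_cast; ring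
      rw [mul_assoc (ψ ξ * (1 / a)), ← e4]; ring


lemma smooth_tA (ψ K : ℝ → ℂ) (hc : Continuous ψ) (hi : Integrable ψ)
    (hK : ∀ y : ℝ, K y = ∫ ξ : ℝ, Complex.exp (((2 * Real.pi * ξ * y : ℝ) : ℂ) * Complex.I) * ψ ξ)
    (hKi : Integrable K) {P : Measure ℝ} [IsProbabilityMeasure P]
    (hP : Integrable (fun x => Real.exp x) P)
    {T : ℝ} (hT : 0 < T) (t : ℝ) :
    ∫ y, K y * (tA P (t + y / T) : ℂ) =
      ∫ ξ : ℝ, ψ ξ * (T / (1 + (2 * Real.pi * T * ξ : ℝ) * Complex.I)) *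
        Complex.exp (-(((2 * Real.pi * T * ξ : ℝ) : ℂ) * Complex.I) * t) * tcf P (2 * Real.pi * T * ξ) := by
  have hU : ∀ y : ℝ, MeasurableSet (Set.Ioi y) := fun y => measurableSet_Ioi
  set g : ℝ → ℝ → ℂ := fun y x => (Set.Ioi (t + y / T)).indicator
    (fun _ => ((Real.exp (t + y / T) : ℝ) : ℂ)) x with hg
  have hset : MeasurableSet {p : ℝ × ℝ | t + p.1 / T < p.2} :=
    measurableSet_lt (by fun_prop) (by fun_prop)
  have hgn : ∀ y x, ‖g y x‖ ≤ Real.exp x := by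
    intro y x
    by_cases hx : x ∈ Set.Ioi (t + y / T)
    · simp only [hg, Set.indicator_of_mem hx]
      rw [Complex.norm_real, Real.norm_of_nonneg (Real.exp_pos _).le]
      exact Real.exp_le_exp.2 (le_of_lt hx)
    · simp only [hg, Set.indicator_of_notMem hx]; simp [Real.exp_nonneg]
  have hgm : Measurable (fun p : ℝ × ℝ => g p.1 p.2) := by
    have : (fun p : ℝ × ℝ => g p.1 p.2) = {p : ℝ × ℝ | t + p.1 / T < p.2}.indicator
        (fun p => ((Real.exp (t + p.1 / T) : ℝ) : ℂ)) := by
      funext p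
      simp only [hg, Set.indicator_apply, Set.mem_Ioi, Set.mem_setOf_eq]
    rw [this]
    exact Measurable.indicator (by fun_prop) hset
  have hint : Integrable (fun p : ℝ × ℝ => K p.1 * g p.1 p.2) (volume.prod P) := by
    refine (hKi.norm.mul_prod hP).mono ?_ (Eventually.of_forall fun p => ?_)
    · exact hKi.1.comp_fst.mul hgm.aestronglyMeasurable
    · rw [norm_mul, norm_mul, norm_norm, Real.norm_of_nonneg (Real.exp_pos _).le]
      exact mul_le_mul_of_nonneg_left (hgn _ _) (norm_nonneg _)
  have e0 : ∀ y, K y * (tA P (t + y / T) : ℂ) = ∫ x, K y * g y x ∂P := by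
    intro y
    rw [integral_const_mul]
    congr 1
    simp only [hg]
    rw [integral_indicator measurableSet_Ioi, setIntegral_const, tA]
    rw [Complex.real_smul]; push_cast; ring
  simp_rw [e0]
  rw [integral_integral_swap hint]
  have e1 : ∀ x, ∫ y, K y * g y x = ∫ ξ : ℝ, ψ ξ * (T / (1 + (2 * Real.pi * T * ξ : ℝ) * Complex.I)) *
        Complex.exp (-(((2 * Real.pi * T * ξ : ℝ) : ℂ) * Complex.I) * t) *
        Complex.exp ((1 + (2 * Real.pi * T * ξ : ℝ) * Complex.I) * x) := by
    intro x
    rw [← smooth_inner ψ K hc hi hK hT t x]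
    refine integral_congr_ae ?_
    have : ∀ᵐ y : ℝ, y ≠ T * (x - t) := by
      simp [ae_iff]
    filter_upwards [this] with y hy
    congr 1
    have hiff : x ∈ Set.Ioi (t + y / T) ↔ y ∈ Set.Iic (T * (x - t)) := by
      rw [Set.mem_Ioi, Set.mem_Iic, ← lt_sub_iff_add_lt', div_lt_iff₀ hT, mul_comm]
      exact ⟨le_of_lt, fun h => lt_of_le_of_ne h hy⟩
    simp only [hg, Set.indicator_apply, hiff]
  simp_rw [e1]
  have hnz : ∀ u : ℝ, (1 + u * Complex.I : ℂ) ≠ 0 := by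
    intro u h; have := congrArg Complex.re h; simp at this
  have hn1 : ∀ u : ℝ, 1 ≤ ‖(1 + u * Complex.I : ℂ)‖ := by
    intro u
    have := Complex.abs_re_le_norm (1 + u * Complex.I : ℂ)
    simpa using this
  have hint2 : Integrable (fun p : ℝ × ℝ => ψ p.2 * (T / (1 + (2 * Real.pi * T * p.2 : ℝ) * Complex.I)) *
        Complex.exp (-(((2 * Real.pi * T * p.2 : ℝ) : ℂ) * Complex.I) * t) *
        Complex.exp ((1 + (2 * Real.pi * T * p.2 : ℝ) * Complex.I) * p.1)) (P.prod volume) := by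
    refine ((hP.mul_prod hi.norm).const_mul T).mono ?_ (Eventually.of_forall fun p => ?_)
    · refine Continuous.aestronglyMeasurable ?_
      have : Continuous fun p : ℝ × ℝ => (T / (1 + (2 * Real.pi * T * p.2 : ℝ) * Complex.I) : ℂ) :=
        Continuous.div (by fun_prop) (by fun_prop) fun p => hnz _
      have := hc.comp (continuous_snd (X := ℝ) (Y := ℝ))
      fun_prop
    · rw [norm_mul, norm_mul, norm_mul, norm_div, Complex.norm_exp, Complex.norm_exp]
      have r1 : (-(((2 * Real.pi * T * p.2 : ℝ) : ℂ) * Complex.I) * t).re = 0 := by simp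
      have r2 : ((1 + (2 * Real.pi * T * p.2 : ℝ) * Complex.I) * p.1 : ℂ).re = p.1 := by simp
      rw [r1, r2, Real.exp_zero, mul_one, Complex.norm_real, Real.norm_of_nonneg hT.le, norm_mul, norm_mul, norm_norm,
        Real.norm_of_nonneg hT.le, Real.norm_of_nonneg (Real.exp_pos _).le]
      have : T / ‖(1 + (2 * Real.pi * T * p.2 : ℝ) * Complex.I : ℂ)‖ ≤ T := div_le_self hT.le (hn1 _)
      calc ‖ψ p.2‖ * (T / ‖(1 + (2 * Real.pi * T * p.2 : ℝ) * Complex.I : ℂ)‖) * Real.exp p.1 ≤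
          ‖ψ p.2‖ * T * Real.exp p.1 := by gcongr
        _ = _ := by ring
  rw [integral_integral_swap hint2]
  congr 1; funext ξ
  rw [integral_const_mul, tcf]


lemma tA_meas (P : Measure ℝ) [IsProbabilityMeasure P] : Measurable (tA P) := by
  have : Antitone fun t => P.real (Set.Ioi t) := fun a b hab =>
    measureReal_mono (Set.Ioi_subset_Ioi hab)
  exact Real.measurable_exp.mul this.measurable

lemma tcf_norm_le {P : Measure ℝ} {S : ℝ} (h : NearG P S) (hS : 160 ≤ S) (ξ : ℝ) : ‖tcf P ξ‖ ≤ 2 := by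
  refine (norm_integral_le_integral_norm _).trans ?_
  refine le_trans (le_of_eq ?_) (mass_bound h hS)
  congr 1; funext x
  rw [Complex.norm_exp]; simp

lemma tcf_meas (P : Measure ℝ) [IsProbabilityMeasure P] : StronglyMeasurable (tcf P) := by
  have : StronglyMeasurable (fun p : ℝ × ℝ => Complex.exp ((1 + p.1 * Complex.I) * p.2)) :=
    Continuous.stronglyMeasurable (by fun_prop)
  exact this.integral_prod_right

lemma tA_close : ∃ K0 : ℝ, 0 < K0 ∧ ∀ (P : Measure ℝ) (S : ℝ), NearG P S → 160 ≤ S → ∀ t,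
    |tA P t - tA (gaussianReal 0 1) t| ≤ K0 / S := by
  obtain ⟨ψ, K, hc, hi, hψ1, hψ0, hK, hKi, hKi1, hK1⟩ := exists_kernel
  set A := ∫ y, |y| * ‖K y‖ with hA
  set B := ∫ y, ‖K y‖ with hB
  have hA0 : 0 ≤ A := integral_nonneg fun y => by positivity
  have hB0 : 0 ≤ B := integral_nonneg fun y => by positivity
  refine ⟨13440 * A + 12000 * B + 5120, by positivity, ?_⟩
  intro P S h hS t
  have hP := h.prob
  have hS0 : 0 < S := by linarith
  have hG := nearG_gauss hS0
  set G := gaussianReal 0 1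
  set T := S / 160 with hTd
  have hT : 0 < T := by positivity
  set D : ℝ → ℝ := fun u => tA P u - tA G u with hD
  have hDb : ∀ u, |D u| ≤ 2 := by
    intro u
    have a1 := tA_nonneg (P := P) u
    have a2 := tA_nonneg (P := G) u
    have a3 := tA_le h hS u
    have a4 := tA_le hG hS u
    rw [abs_le]; constructor <;> simp only [hD] <;> linarith
  have hDl : ∀ u v, |D u - D v| ≤ 84 * |u - v| + 12000 / S := by
    intro u v
    have a1 := tA_lip h hS u v
    have a2 := tA_lip hG hS u v
    have : D u - D v = (tA P u - tA P v) - (tA G u - tA G v) := by simp only [hD]; ring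
    rw [this]
    refine (abs_sub _ _).trans ?_
    have : (12000 : ℝ) / S = 6000 / S + 6000 / S := by ring
    linarith
  have hKt : ∀ (Q : Measure ℝ), NearG Q S → Integrable fun y => K y * (tA Q (t + y / T) : ℂ) := by
    intro Q hQ
    have := hQ.prob
    refine hKi.mul_bdd (c := 2) ?_ (Eventually.of_forall fun y => ?_)
    · refine (Complex.measurable_ofReal.comp ((tA_meas Q).comp ?_)).aestronglyMeasurable
      fun_prop
    · rw [Complex.norm_real, Real.norm_of_nonneg (tA_nonneg _)]; exact tA_le hQ hS _
  have hKD : Integrable fun y => K y * (D (t + y / T) : ℂ) := by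
    refine ((hKt P h).sub (hKt G hG)).congr (Eventually.of_forall fun y => ?_)
    simp only [hD, Pi.sub_apply]; push_cast; ring
  have hnz : ∀ u : ℝ, (1 + u * Complex.I : ℂ) ≠ 0 := by
    intro u h; have := congrArg Complex.re h; simp at this
  have hn1 : ∀ u : ℝ, 1 ≤ ‖(1 + u * Complex.I : ℂ)‖ := by
    intro u
    have := Complex.abs_re_le_norm (1 + u * Complex.I : ℂ)
    simpa using this
  set w : ℝ → ℂ := fun ξ => ψ ξ * (T / (1 + (2 * Real.pi * T * ξ : ℝ) * Complex.I)) *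
        Complex.exp (-(((2 * Real.pi * T * ξ : ℝ) : ℂ) * Complex.I) * t) with hw
  have hwn : ∀ ξ, ‖w ξ‖ ≤ T * ‖ψ ξ‖ := by
    intro ξ
    simp only [hw]
    rw [norm_mul, norm_mul, norm_div, Complex.norm_exp]
    have r1 : (-(((2 * Real.pi * T * ξ : ℝ) : ℂ) * Complex.I) * t).re = 0 := by simp
    rw [r1, Real.exp_zero, mul_one, Complex.norm_real, Real.norm_of_nonneg hT.le, mul_comm]
    gcongr
    exact div_le_self hT.le (hn1 _)
  have hwc : Continuous w := by
    have : Continuous fun p : ℝ => (T / (1 + (2 * Real.pi * T * p : ℝ) * Complex.I) : ℂ) :=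
        Continuous.div (by fun_prop) (by fun_prop) fun p => hnz _
    simp only [hw]
    fun_prop
  have hwi : Integrable w := (hi.norm.const_mul T).mono' hwc.aestronglyMeasurable
    (Eventually.of_forall hwn)
  have hwt : ∀ (Q : Measure ℝ), NearG Q S → Integrable fun ξ => w ξ * tcf Q (2 * Real.pi * T * ξ) := by
    intro Q hQ
    have := hQ.prob
    refine hwi.mul_bdd (c := 2) ?_ (Eventually.of_forall fun y => tcf_norm_le hQ hS _)
    exact ((tcf_meas Q).comp_measurable (by fun_prop)).aestronglyMeasurable
  have hDT : ∫ y, K y * (D (t + y / T) : ℂ) =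
      ∫ ξ, w ξ * (tcf P (2 * Real.pi * T * ξ) - tcf G (2 * Real.pi * T * ξ)) := by
    have e1 := smooth_tA ψ K hc hi hK hKi h.expInt hT t
    have e2 := smooth_tA ψ K hc hi hK hKi hG.expInt hT t
    simp only [mul_sub]
    rw [integral_sub (hwt P h) (hwt G hG), ← e1, ← e2, ← integral_sub (hKt P h) (hKt G hG)]
    congr 1; funext y; simp only [hD]; push_cast; ring
  have hDTb : ‖∫ y, K y * (D (t + y / T) : ℂ)‖ ≤ 5120 / S := by
    rw [hDT]
    have hb : ∀ ξ, ‖w ξ * (tcf P (2 * Real.pi * T * ξ) - tcf G (2 * Real.pi * T * ξ))‖ ≤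
        T * (5120 / S) * Real.exp (-(Real.pi ^ 2 * T ^ 2) * ξ ^ 2) := by
      intro ξ
      by_cases hξ : 1 ≤ 2 * Real.pi * |ξ|
      · have : w ξ = 0 := by simp only [hw]; rw [hψ0 ξ hξ]; ring
        rw [this, zero_mul, norm_zero]; positivity
      · push Not at hξ
        have hle : |2 * Real.pi * T * ξ| ≤ S / 160 := by
          rw [abs_mul, abs_of_pos (by positivity), ← hTd]
          have : 2 * Real.pi * T * |ξ| = T * (2 * Real.pi * |ξ|) := by ring
          rw [this]; exact mul_le_of_le_one_right hT.le hξ.le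
        have h3 := tcf_diff h hS _ hle
        rw [norm_mul]
        have h4 : ‖w ξ‖ ≤ T := (hwn ξ).trans (mul_le_of_le_one_right hT.le (hψ1 ξ))
        refine (mul_le_mul h4 h3 (norm_nonneg _) hT.le).trans (le_of_eq ?_)
        rw [show -(2 * Real.pi * T * ξ) ^ 2 / 4 = -(Real.pi ^ 2 * T ^ 2) * ξ ^ 2 by ring]; ring
    have hgi : Integrable fun ξ : ℝ => T * (5120 / S) * Real.exp (-(Real.pi ^ 2 * T ^ 2) * ξ ^ 2) :=
      (integrable_exp_neg_mul_sq (by positivity)).const_mul _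
    refine (norm_integral_le_of_norm_le hgi (Eventually.of_forall hb)).trans ?_
    rw [integral_const_mul, integral_gaussian]
    have : Real.sqrt (Real.pi / (Real.pi ^ 2 * T ^ 2)) ≤ 1 / T := by
      apply Real.sqrt_le_iff.2 ⟨by positivity, ?_⟩
      rw [div_pow 1 T, one_pow, div_le_div_iff₀ (by positivity) (by positivity)]
      nlinarith [Real.pi_gt_three, mul_pos Real.pi_pos (pow_pos hT 2)]
    calc _ ≤ T * (5120 / S) * (1 / T) := by gcongr
      _ = _ := by field_simp
  have hKc : Integrable fun y => K y * (D t : ℂ) := hKi.mul_const _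
  have e3 : (D t : ℂ) = ∫ y, K y * (D t : ℂ) := by rw [integral_mul_const, hK1, one_mul]
  have hdiff : ‖(D t : ℂ) - ∫ y, K y * (D (t + y / T) : ℂ)‖ ≤ (13440 * A + 12000 * B) / S := by
    conv_lhs => rw [e3]
    rw [← integral_sub hKc hKD]
    have hb : ∀ y, ‖K y * (D t : ℂ) - K y * (D (t + y / T) : ℂ)‖ ≤
        13440 / S * (|y| * ‖K y‖) + 12000 / S * ‖K y‖ := by
      intro y
      rw [← mul_sub, norm_mul, ← Complex.ofReal_sub, Complex.norm_real, Real.norm_eq_abs]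
      have := hDl t (t + y / T)
      have e : |t - (t + y / T)| = |y| * (160 / S) := by
        rw [show t - (t + y / T) = -(y * (160 / S)) by rw [hTd]; field_simp; ring, abs_neg, abs_mul,
          abs_of_pos (a := 160 / S) (by positivity)]
      rw [e] at this
      calc _ ≤ ‖K y‖ * (84 * (|y| * (160 / S)) + 12000 / S) := by gcongr
        _ = _ := by ring
    refine (norm_integral_le_of_norm_le ((hKi1.const_mul _).add (hKi.norm.const_mul _))
      (Eventually.of_forall hb)).trans (le_of_eq ?_)
    simp only [Pi.add_apply]
    rw [integral_add (hKi1.const_mul _) (hKi.norm.const_mul _), integral_const_mul, integral_const_mul]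
    ring
  have : ‖(D t : ℂ)‖ ≤ (13440 * A + 12000 * B) / S + 5120 / S := by
    have := norm_add_le ((D t : ℂ) - ∫ y, K y * (D (t + y / T) : ℂ)) (∫ y, K y * (D (t + y / T) : ℂ))
    rw [sub_add_cancel] at this
    linarith
  rw [Complex.norm_real, Real.norm_eq_abs, ← add_div] at this
  exact this


lemma NearG.neg {P : Measure ℝ} {S : ℝ} (h : NearG P S) (hi : Integrable (fun x => Real.exp (-x)) P) :
    NearG (P.map (fun x => -x)) S := by
  have hm : Measurable (fun x : ℝ => -x) := measurable_neg
  have := h.prob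
  refine ⟨Measure.isProbabilityMeasure_map hm.aemeasurable, ?_, ?_⟩
  · rw [integrable_map_measure (by fun_prop) hm.aemeasurable]
    exact hi
  · intro z hz
    obtain ⟨r, h1, h2⟩ := h.cf (-z) (by rwa [norm_neg])
    refine ⟨r, ?_, by rwa [norm_neg] at h2⟩
    rw [integral_map hm.aemeasurable (Continuous.aestronglyMeasurable (by fun_prop))]
    rw [neg_sq] at h1
    rw [← h1]
    congr 1; funext x; push_cast; ring_nf

lemma Ioi_close : ∃ K0 : ℝ, 0 < K0 ∧ ∀ (P : Measure ℝ) (S : ℝ), NearG P S → 160 ≤ S → ∀ t,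
    |P.real (Set.Ioi t) - (gaussianReal 0 1).real (Set.Ioi t)| ≤ K0 / S * Real.exp (-t) := by
  obtain ⟨K0, hK, h⟩ := tA_close
  refine ⟨K0, hK, fun P S hP hS t => ?_⟩
  have := h P S hP hS t
  unfold tA at this
  rw [← mul_sub, abs_mul, abs_of_pos (Real.exp_pos _)] at this
  rw [Real.exp_neg, ← div_eq_mul_inv, le_div_iff₀ (Real.exp_pos _)]
  linarith

lemma Ici_close : ∃ K0 : ℝ, 0 < K0 ∧ ∀ (P : Measure ℝ) (S : ℝ), NearG P S → 160 ≤ S → ∀ t,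
    |P.real (Set.Ici t) - (gaussianReal 0 1).real (Set.Ici t)| ≤ K0 / S * Real.exp (-t) := by
  obtain ⟨K0, hK, h⟩ := Ioi_close
  refine ⟨K0 + 12000, by positivity, fun P S hP hS t => ?_⟩
  have hat : ∀ Q : Measure ℝ, NearG Q S → 0 ≤ Q.real {t} ∧ Q.real {t} ≤ 6000 / S * Real.exp (-t) ∧
      Q.real (Set.Ici t) = Q.real {t} + Q.real (Set.Ioi t) := by
    intro Q hQ
    have := hQ.prob
    refine ⟨measureReal_nonneg, ?_, ?_⟩
    · have h1 := exp_mass hQ.expInt t {t} (measurableSet_singleton t) (by simp)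
      have h2 := conc hQ hS t t le_rfl
      rw [Set.Icc_self, sub_self, mul_zero, zero_add] at h2
      rw [Real.exp_neg, ← div_eq_mul_inv, le_div_iff₀ (Real.exp_pos _)]
      linarith
    · rw [← Set.Ioi_insert, Set.insert_eq, measureReal_union (by simp) measurableSet_Ioi]
  have hS0 : 0 < S := by linarith
  obtain ⟨a1, a2, a3⟩ := hat P hP
  obtain ⟨b1, b2, b3⟩ := hat _ (nearG_gauss hS0)
  have := h P S hP hS t
  rw [a3, b3]
  have e : (K0 + 12000) / S * Real.exp (-t) = K0 / S * Real.exp (-t) + 6000 / S * Real.exp (-t) +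
    6000 / S * Real.exp (-t) := by ring
  rw [e]
  rw [abs_le] at this ⊢
  constructor <;> linarith [this.1, this.2]

lemma Iic_close : ∃ K0 : ℝ, 0 < K0 ∧ ∀ (P : Measure ℝ) (S : ℝ), NearG P S →
    Integrable (fun x => Real.exp (-x)) P → 160 ≤ S → ∀ t,
    |P.real (Set.Iic t) - (gaussianReal 0 1).real (Set.Iic t)| ≤ K0 / S * Real.exp (-|t|) := by
  obtain ⟨K1, hK1, h1⟩ := Ioi_close
  obtain ⟨K2, hK2, h2⟩ := Ici_close
  refine ⟨K1 + K2, by positivity, fun P S hP hi hS t => ?_⟩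
  have hS0 : 0 < S := by linarith
  have := hP.prob
  rcases le_total 0 t with ht | ht
  · have hc : ∀ Q : Measure ℝ, IsProbabilityMeasure Q → Q.real (Set.Iic t) = 1 - Q.real (Set.Ioi t) := by
      intro Q _
      rw [← Set.compl_Iic, probReal_compl_eq_one_sub measurableSet_Iic]; ring
    rw [hc P this, hc _ inferInstance, abs_of_nonneg ht]
    have h := h1 P S hP hS t
    rw [show ∀ a b : ℝ, 1 - a - (1 - b) = -(a - b) by intros; ring, abs_neg]
    refine h.trans ?_
    gcongr
    linarith
  · have hm : Measurable (fun x : ℝ => -x) := measurable_neg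
    have h := h2 _ S (hP.neg hi) hS (-t)
    have hpre : (fun x : ℝ => -x) ⁻¹' (Set.Ici (-t)) = Set.Iic t := by ext x; simp
    have e2 : (gaussianReal 0 1).real (Set.Ici (-t)) = (gaussianReal 0 1).real (Set.Iic t) := by
      have : (gaussianReal 0 1).map (fun x : ℝ => -x) = gaussianReal 0 1 := by
        rw [gaussianReal_map_neg]; simp
      conv_lhs => rw [← this]
      rw [map_measureReal_apply hm measurableSet_Ici, hpre]
    rw [map_measureReal_apply hm measurableSet_Ici, hpre, e2] at h
    rw [abs_of_nonpos ht]
    refine h.trans ?_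
    gcongr
    linarith


section markov
variable {O : Type*} [m0 : MeasurableSpace O] {𝒳 : ℕ → Type*} [∀ j, MeasurableSpace (𝒳 j)]
  {μ : Measure O} [IsProbabilityMeasure μ] {X : ∀ j, O → 𝒳 j} {κ : ∀ j n, Kernel (𝒳 j) (𝒳 (j + n))}

lemma pastSigma_le (hX : ∀ j, Measurable (X j)) (j : ℕ) : pastSigma X j ≤ m0 :=
  iSup₂_le fun i _ => (hX i).comap_le

lemma comap_le_pastSigma (j : ℕ) : MeasurableSpace.comap (X j) inferInstance ≤ pastSigma X j :=
  le_iSup₂_of_le (f := fun i (_ : i ∈ Finset.range (j + 1)) =>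
    MeasurableSpace.comap (X i) inferInstance) j (by simp) le_rfl

lemma markov_bind (hM : IsInhomMarkov μ X κ) (j n : ℕ) (s : Set O) (hs : MeasurableSet[pastSigma X j] s) :
    (μ.restrict s).map (X (j + n)) = ((μ.restrict s).map (X j)).bind (κ j n) := by
  have hle := pastSigma_le hM.meas j
  have := hM.isMarkovKernel j n
  ext Γ hΓ
  rw [Measure.bind_apply hΓ (Kernel.aemeasurable _),
    lintegral_map ((κ j n).measurable_coe hΓ) (hM.meas j),
    Measure.map_apply (hM.meas _) hΓ, Measure.restrict_apply (hM.meas _ hΓ)]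
  have hfin : ∫⁻ ω in s, κ j n (X j ω) Γ ∂μ ≠ ∞ := by
    refine ne_top_of_le_ne_top (b := ∫⁻ ω in s, 1 ∂μ) (by simp) (lintegral_mono fun ω => prob_le_one)
  rw [← ENNReal.toReal_eq_toReal_iff' (measure_ne_top _ _) hfin]
  have hmk : Measurable fun ω => κ j n (X j ω) Γ := ((κ j n).measurable_coe hΓ).comp (hM.meas j)
  rw [← integral_toReal hmk.aemeasurable (Eventually.of_forall fun ω => measure_lt_top _ _)]
  have hind : (fun ω => Γ.indicator (fun _ => (1 : ℝ)) (X (j + n) ω)) =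
      (X (j + n) ⁻¹' Γ).indicator (fun _ => (1 : ℝ)) := by
    rfl
  have hc := hM.cond j n Γ hΓ
  have hint : Integrable ((X (j + n) ⁻¹' Γ).indicator (fun _ => (1 : ℝ))) μ :=
    (integrable_const _).indicator (hM.meas _ hΓ)
  rw [hind] at hc
  rw [← setIntegral_congr_ae (hle _ hs) (hc.mono fun ω h _ => h), setIntegral_condExp hle hint hs,
    integral_indicator (hM.meas _ hΓ), setIntegral_const, smul_eq_mul, mul_one, Measure.real,
    Measure.restrict_apply (hM.meas _ hΓ)]

lemma markov_condExp (hM : IsInhomMarkov μ X κ) (j n : ℕ) (g : 𝒳 (j + n) → ℂ) (hg : StronglyMeasurable g)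
    (B : ℝ) (hB : ∀ x, ‖g x‖ ≤ B) :
    (fun ω => ∫ x, g x ∂κ j n (X j ω)) =ᵐ[μ] μ[fun ω => g (X (j + n) ω)|pastSigma X j] := by
  have hle := pastSigma_le hM.meas j
  have := hM.isMarkovKernel j n
  have hgk : StronglyMeasurable fun x => ∫ y, g y ∂κ j n x := hg.integral_kernel
  have hB' : ∀ x, ‖∫ y, g y ∂κ j n x‖ ≤ B := fun x => by
    refine (norm_integral_le_of_norm_le_const (Eventually.of_forall hB)).trans ?_
    simp
  have hi1 : Integrable (fun ω => g (X (j + n) ω)) μ :=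
    Integrable.of_bound (hg.comp_measurable (hM.meas _)).aestronglyMeasurable B
      (Eventually.of_forall fun ω => hB _)
  have hi2 : Integrable (fun ω => ∫ x, g x ∂κ j n (X j ω)) μ :=
    Integrable.of_bound (hgk.comp_measurable (hM.meas _)).aestronglyMeasurable B
      (Eventually.of_forall fun ω => hB' _)
  refine ae_eq_condExp_of_forall_setIntegral_eq hle hi1 (fun s _ _ => hi2.integrableOn) ?_ ?_
  · intro s hs _
    have hb := markov_bind hM j n s hs
    have e1 : ∫ ω in s, (∫ x, g x ∂κ j n (X j ω)) ∂μ =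
        ∫ x, (∫ y, g y ∂κ j n x) ∂((μ.restrict s).map (X j)) := by
      rw [integral_map (hM.meas j).aemeasurable hgk.aestronglyMeasurable]
    have e2 : ∫ ω in s, g (X (j + n) ω) ∂μ = ∫ y, g y ∂((μ.restrict s).map (X (j + n))) := by
      rw [integral_map (hM.meas _).aemeasurable hg.aestronglyMeasurable]
    rw [e1, e2, hb]
    have hfm : IsFiniteMeasure ((μ.restrict s).map (X (j + n))) := inferInstance
    rw [hb] at hfm
    have := Kernel.integral_comp (η := κ j n) (κ := Kernel.const Unit ((μ.restrict s).map (X j))) (a := ())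
      (f := g) (by
        rw [Kernel.comp_apply, Kernel.const_apply]
        exact Integrable.of_bound hg.aestronglyMeasurable B (Eventually.of_forall hB))
    rw [Kernel.comp_apply, Kernel.const_apply] at this
    exact this.symm
  · have : StronglyMeasurable[MeasurableSpace.comap (X j) inferInstance]
        (fun ω => ∫ x, g x ∂κ j n (X j ω)) :=
      hgk.comp_measurable (comap_measurable (X j))
    exact (this.mono (comap_le_pastSigma j)).aestronglyMeasurable

/-- replace a `comap`-measurable function by a globally bounded one -/
lemma trunc_rep {j : ℕ} (hX : Measurable (X j)) {V : O → ℂ} {c : ℂ} {r : ℝ} (hr : 0 ≤ r)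
    (hV : AEStronglyMeasurable[MeasurableSpace.comap (X j) inferInstance] V μ)
    (h : ∀ᵐ ω ∂μ, ‖V ω - c‖ ≤ r) :
    ∃ g : 𝒳 j → ℂ, StronglyMeasurable g ∧ (∀ x, ‖g x - c‖ ≤ r) ∧ V =ᵐ[μ] fun ω => g (X j ω) := by
  obtain ⟨V', hV', hVV⟩ := hV
  obtain ⟨g, hg, rfl⟩ := hV'.exists_eq_measurable_comp
  classical
  refine ⟨fun x => if ‖g x - c‖ ≤ r then g x else c, ?_, ?_, ?_⟩
  · refine StronglyMeasurable.ite ?_ hg stronglyMeasurable_const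
    exact measurableSet_le (hg.measurable.sub_const c).norm measurable_const
  · intro x
    simp only
    split_ifs with h1
    · exact h1
    · simpa using hr
  · filter_upwards [hVV, h] with ω h1 h2
    rw [h1] at h2 ⊢
    simp only [Function.comp_apply] at h2 ⊢
    rw [if_pos h2]

lemma mixData (hM : IsInhomMarkov μ X κ)
    (n₀ : ℕ) (γ : ℝ) (hγ : γ ∈ Set.Ioo (0 : ℝ) 1)
    (m : ∀ j, Measure (𝒳 j)) (hm : ∀ j, IsProbabilityMeasure (m j))
    (hDoeblin : ∀ j (x : 𝒳 j) (Γ : Set (𝒳 (j + n₀))), MeasurableSet Γ →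
      ENNReal.ofReal γ * m (j + n₀) Γ ≤ κ j n₀ x Γ) :
    MixData μ (fun j => ⨆ i ∈ Finset.range j, MeasurableSpace.comap (X i) inferInstance)
      (fun j => MeasurableSpace.comap (X j) inferInstance) n₀ γ := by
  have mono : Monotone (fun j => ⨆ i ∈ Finset.range j, MeasurableSpace.comap (X i) inferInstance) := by
    intro a b hab
    refine iSup₂_le fun i hi => le_iSup₂_of_le (f := fun i (_ : i ∈ Finset.range b) =>
      MeasurableSpace.comap (X i) inferInstance) i ?_ le_rfl
    simp at hi ⊢; omega
  have le : ∀ j, (⨆ i ∈ Finset.range j, MeasurableSpace.comap (X i) inferInstance) ≤ m0 :=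
    fun j => iSup₂_le fun i _ => (hM.meas i).comap_le
  refine ⟨mono, le, fun j => comap_le_pastSigma j, by simp, ?_, ?_⟩
  · intro j V hV bV
    obtain ⟨_, B, hB⟩ := bV
    have hr : 0 ≤ |B| := abs_nonneg B
    obtain ⟨g, hg, hgB, hVg⟩ := trunc_rep (hM.meas (j + 1)) (c := 0) hr hV
      (hB.mono fun ω h => by rw [sub_zero]; exact h.trans (le_abs_self B))
    simp only [sub_zero] at hgB
    have h1 := markov_condExp hM j 1 g hg _ hgB
    have h2 : μ[V|pastSigma X j] =ᵐ[μ] μ[fun ω => g (X (j + 1) ω)|pastSigma X j] := condExp_congr_ae hVg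
    have := hM.isMarkovKernel j 1
    have hgk : StronglyMeasurable fun x => ∫ y, g y ∂κ j 1 x := hg.integral_kernel
    exact ⟨_, hgk.comp_measurable (comap_measurable (X j)), h2.trans h1.symm⟩
  · intro j V c r hV bV hVr
    have hr : 0 ≤ r := by
      obtain ⟨ω, hω⟩ := hVr.exists
      exact (norm_nonneg _).trans hω
    obtain ⟨g, hg, hgB, hVg⟩ := trunc_rep (hM.meas (j + n₀)) hr hV hVr
    have hgb : ∀ x, ‖g x‖ ≤ ‖c‖ + r := fun x => by
      have := norm_add_le (g x - c) c
      rw [sub_add_cancel] at this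
      linarith [hgB x]
    have hgi : ∀ ν : Measure (𝒳 (j + n₀)), IsFiniteMeasure ν → Integrable g ν := fun ν _ =>
      Integrable.of_bound hg.aestronglyMeasurable _ (Eventually.of_forall hgb)
    have hgci : ∀ ν : Measure (𝒳 (j + n₀)), IsFiniteMeasure ν → Integrable (fun x => g x - c) ν :=
      fun ν _ => (hgi ν inferInstance).sub (integrable_const _)
    have hsub : ∀ ν : Measure (𝒳 (j + n₀)), IsProbabilityMeasure ν →
        ∫ x, (g x - c) ∂ν = ∫ x, g x ∂ν - c := fun ν _ => by
      rw [integral_sub (hgi ν inferInstance) (integrable_const _)]; simp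
    have hbd : ∀ ν : Measure (𝒳 (j + n₀)), IsFiniteMeasure ν → ‖∫ x, (g x - c) ∂ν‖ ≤ r * ν.real Set.univ :=
      fun ν _ => norm_integral_le_of_norm_le_const (Eventually.of_forall hgB)
    have := hm (j + n₀)
    have hγ0 := hγ.1
    set c' : ℂ := c + γ * (∫ x, g x ∂m (j + n₀) - c) with hc'
    refine ⟨c', ?_, ?_⟩
    · have h1 := hbd (m (j + n₀)) inferInstance
      rw [hsub _ inferInstance] at h1
      rw [hc', add_sub_cancel_left, norm_mul, Complex.norm_real, Real.norm_of_nonneg hγ0.le]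
      simp only [probReal_univ, mul_one] at h1
      gcongr
    have hk : ∀ x, ‖∫ y, g y ∂κ j n₀ x - c'‖ ≤ (1 - γ) * r := by
      intro x
      have := hM.isMarkovKernel j n₀
      have hle : ENNReal.ofReal γ • m (j + n₀) ≤ κ j n₀ x := by
        refine Measure.le_iff.2 fun Γ hΓ => ?_
        simpa using hDoeblin j x Γ hΓ
      have hfin : IsFiniteMeasure (ENNReal.ofReal γ • m (j + n₀)) :=
        ⟨lt_of_le_of_lt (hle _) (measure_lt_top _ _)⟩
      set ν := κ j n₀ x - ENNReal.ofReal γ • m (j + n₀) with hν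
      have hadd : ν + ENNReal.ofReal γ • m (j + n₀) = κ j n₀ x := Measure.sub_add_cancel_of_le hle
      have hνf : IsFiniteMeasure ν := inferInstance
      have hmass : ν.real Set.univ = 1 - γ := by
        have h1 : (κ j n₀ x).real Set.univ = 1 := by simp
        rw [← hadd, measureReal_add_apply] at h1
        rw [measureReal_ennreal_smul_apply] at h1
        simp only [probReal_univ, mul_one, ENNReal.toReal_ofReal hγ0.le] at h1
        linarith
      have h2 : ∫ y, (g y - c) ∂κ j n₀ x = ∫ y, (g y - c) ∂ν + γ * ∫ y, (g y - c) ∂m (j + n₀) := by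
        rw [← hadd, integral_add_measure (hgci _ inferInstance) (hgci _ inferInstance),
          integral_smul_measure, ENNReal.toReal_ofReal hγ0.le, Complex.real_smul]
      rw [hsub (κ j n₀ x) inferInstance, hsub (m (j + n₀)) inferInstance] at h2
      have h3 : ∫ y, g y ∂κ j n₀ x - c' = ∫ y, (g y - c) ∂ν := by
        rw [hc']
        linear_combination h2
      rw [h3, mul_comm, ← hmass]
      exact hbd ν inferInstance
    have h1 := markov_condExp hM j n₀ g hg _ hgb
    have h2 : μ[V|pastSigma X j] =ᵐ[μ] μ[fun ω => g (X (j + n₀) ω)|pastSigma X j] := condExp_congr_ae hVg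
    have h3 : ∀ᵐ ω ∂μ, ‖μ[V|pastSigma X j] ω - c'‖ ≤ (1 - γ) * r := by
      filter_upwards [h1, h2] with ω a b
      rw [b, ← a]; exact hk _
    have h4 := condExp_ball (le j) (bV.condExp (pastSigma X j)) c' _ h3
    have h5 := condExp_condExp_of_le (μ := μ) (f := V) (mono (Nat.le_succ j)) (le (j + 1))
    filter_upwards [h4, h5] with ω a b
    rw [← b]; exact a

end markov


section fin
variable {O : Type*} {m0 : MeasurableSpace O} {μ : Measure O} [IsProbabilityMeasure μ]

lemma exp_int_map {W : O → ℝ} (hW : AEStronglyMeasurable W μ) {B : ℝ} (hB : ∀ᵐ ω ∂μ, |W ω| ≤ B) :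
    Integrable (fun x => Real.exp x) (μ.map W) ∧ Integrable (fun x => Real.exp (-x)) (μ.map W) := by
  constructor
  · rw [integrable_map_measure (Continuous.aestronglyMeasurable (by fun_prop)) hW.aemeasurable]
    refine Integrable.of_bound (Real.continuous_exp.comp_aestronglyMeasurable hW) (Real.exp B) ?_
    filter_upwards [hB] with ω h
    rw [Function.comp_apply, Real.norm_of_nonneg (Real.exp_pos _).le]
    exact Real.exp_le_exp.2 ((le_abs_self _).trans h)
  · rw [integrable_map_measure (Continuous.aestronglyMeasurable (by fun_prop)) hW.aemeasurable]
    refine Integrable.of_bound (Real.continuous_exp.comp_aestronglyMeasurable hW.neg) (Real.exp B) ?_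
    filter_upwards [hB] with ω h
    rw [Function.comp_apply, Real.norm_of_nonneg (Real.exp_pos _).le]
    exact Real.exp_le_exp.2 ((neg_le_abs _).trans h)

lemma nearG_map {V : O → ℝ} (hV : AEStronglyMeasurable V μ) {B : ℝ}
    (hB : ∀ᵐ ω ∂μ, |V ω| ≤ B) (h0 : ∫ ω, V ω ∂μ = 0) {δ : ℝ} (hδ : 0 < δ) (Λ : ℂ → ℂ)
    (hd : DifferentiableOn ℂ Λ (Metric.ball 0 δ))
    (hΛ : ∀ z ∈ Metric.ball (0:ℂ) δ, Complex.exp (Λ z) = ∫ ω, Complex.exp (z * V ω) ∂μ ∧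
      ‖Λ z‖ ≤ 9 * ‖z‖ ^ 2 * ∫ ω, V ω ^ 2 ∂μ) {σ : ℝ} (hσ : 0 < σ) (hvar : ∫ ω, V ω ^ 2 ∂μ = σ ^ 2)
    (hint : Integrable (fun x => Real.exp x) (μ.map fun ω => V ω / σ)) :
    NearG (μ.map fun ω => V ω / σ) (δ * σ) := by
  have hW : AEMeasurable (fun ω => V ω / σ) μ := hV.aemeasurable.div_const σ
  refine ⟨Measure.isProbabilityMeasure_map hW, hint, fun z hz => ?_⟩
  have hσc : (σ : ℂ) ≠ 0 := by exact_mod_cast hσ.ne'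
  have hn : ‖z / σ‖ = ‖z‖ / σ := by
    rw [norm_div, Complex.norm_real, Real.norm_of_nonneg hσ.le]
  have hzb : z / σ ∈ Metric.ball (0:ℂ) δ := by
    rw [mem_ball_zero_iff, hn, div_lt_iff₀ hσ]; exact hz
  have hc := cubic_bound hV hB h0 Λ hd hΛ (z / σ) hzb
  have he := (hΛ _ hzb).1
  refine ⟨Λ (z / σ) - z ^ 2 / 2, ?_, ?_⟩
  · rw [add_sub_cancel, he, integral_map hW (Continuous.aestronglyMeasurable (by fun_prop))]
    congr 1; funext ω; congr 1; push_cast; field_simp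
  · rw [hvar, hn] at hc
    have e1 : ((σ ^ 2 : ℝ) : ℂ) * (z / σ) ^ 2 / 2 = z ^ 2 / 2 := by push_cast; field_simp
    rw [e1] at hc
    refine hc.trans (le_of_eq ?_)
    field_simp

end fin

lemma tail_le {P : Measure ℝ} [IsProbabilityMeasure P] (h1 : Integrable (fun x => Real.exp x) P)
    (t : ℝ) : P.real (Set.Ioi t) ≤ (∫ x, Real.exp x ∂P) * Real.exp (-t) := by
  have h := exp_mass h1 t (Set.Ioi t) measurableSet_Ioi fun x hx => le_of_lt hx
  have h' := setIntegral_le_integral (s := Set.Ioi t) h1 (Eventually.of_forall fun x => (Real.exp_pos x).le)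
  rw [Real.exp_neg, ← div_eq_mul_inv, le_div_iff₀ (Real.exp_pos _)]
  linarith

lemma tail_le' {P : Measure ℝ} [IsProbabilityMeasure P] (h1 : Integrable (fun x => Real.exp (-x)) P)
    (t : ℝ) : P.real (Set.Iic t) ≤ (∫ x, Real.exp (-x) ∂P) * Real.exp t := by
  have h : ∫ x in Set.Iic t, Real.exp (-t) ∂P ≤ ∫ x in Set.Iic t, Real.exp (-x) ∂P :=
    setIntegral_mono_on (integrable_const _).integrableOn h1.integrableOn measurableSet_Iic fun x hx =>
      Real.exp_le_exp.2 (neg_le_neg hx)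
  rw [setIntegral_const, smul_eq_mul] at h
  have h' := setIntegral_le_integral (s := Set.Iic t) h1 (Eventually.of_forall fun x => (Real.exp_pos _).le)
  rw [Real.exp_neg, ← div_eq_mul_inv, div_le_iff₀ (Real.exp_pos _)] at h
  refine h.trans ?_
  gcongr

lemma crude {P : Measure ℝ} [IsProbabilityMeasure P] (h1 : Integrable (fun x => Real.exp x) P)
    (h2 : Integrable (fun x => Real.exp (-x)) P) :
    ∃ B : ℝ, 0 ≤ B ∧ ∀ t, |P.real (Set.Iic t) - (gaussianReal 0 1).real (Set.Iic t)| ≤ B * Real.exp (-|t|) := by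
  have g1 : Integrable (fun x => Real.exp x) (gaussianReal 0 1) := by
    simpa using integrable_exp_mul_gaussianReal (μ := 0) (v := 1) 1
  have g2 : Integrable (fun x => Real.exp (-x)) (gaussianReal 0 1) := by
    simpa using integrable_exp_mul_gaussianReal (μ := 0) (v := 1) (-1)
  set G := gaussianReal 0 1
  have n1 : 0 ≤ ∫ x, Real.exp x ∂P := integral_nonneg fun x => (Real.exp_pos _).le
  have n2 : 0 ≤ ∫ x, Real.exp (-x) ∂P := integral_nonneg fun x => (Real.exp_pos _).le
  have n3 : 0 ≤ ∫ x, Real.exp x ∂G := integral_nonneg fun x => (Real.exp_pos _).le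
  have n4 : 0 ≤ ∫ x, Real.exp (-x) ∂G := integral_nonneg fun x => (Real.exp_pos _).le
  refine ⟨∫ x, Real.exp x ∂P + ∫ x, Real.exp (-x) ∂P + (∫ x, Real.exp x ∂G + ∫ x, Real.exp (-x) ∂G),
    by positivity, fun t => ?_⟩
  have key : ∀ a b A B C D e : ℝ, 0 ≤ a → 0 ≤ b → a ≤ A * e → b ≤ C * e → 0 ≤ B → 0 ≤ D → 0 ≤ e →
      |a - b| ≤ (A + B + (C + D)) * e := by
    intro a b A B C D e ha hb h1 h2 h3 h4 he
    have := mul_nonneg h3 he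
    have := mul_nonneg h4 he
    rw [abs_le]; constructor <;> nlinarith
  rcases le_total 0 t with ht | ht
  · have hc : ∀ Q : Measure ℝ, IsProbabilityMeasure Q → Q.real (Set.Iic t) = 1 - Q.real (Set.Ioi t) := by
      intro Q _
      rw [← Set.compl_Iic, probReal_compl_eq_one_sub measurableSet_Iic]; ring
    rw [hc P inferInstance, hc G inferInstance, abs_of_nonneg ht,
      show ∀ a b : ℝ, 1 - a - (1 - b) = -(a - b) by intros; ring, abs_neg]
    exact key _ _ _ _ _ _ _ measureReal_nonneg measureReal_nonneg (tail_le h1 t) (tail_le g1 t) n2 n4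
      (Real.exp_pos _).le
  · rw [abs_of_nonpos ht, neg_neg, add_comm (∫ x, Real.exp x ∂P), add_comm (∫ x, Real.exp x ∂G)]
    exact key _ _ _ _ _ _ _ measureReal_nonneg measureReal_nonneg (tail_le' h2 t) (tail_le' g2 t) n1 n3
      (Real.exp_pos _).le

lemma lq_fin {q : ℝ} (hq : 0 < q) :
    eLpNorm (fun t : ℝ => Real.exp (-|t|)) (ENNReal.ofReal q) volume ≠ ∞ := by
  have hm : MemLp (fun t : ℝ => Real.exp (-|t|)) (ENNReal.ofReal q) volume := by
    rw [← integrable_norm_rpow_iff (Continuous.aestronglyMeasurable (by fun_prop))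
      (by simpa using hq) ENNReal.ofReal_ne_top, ENNReal.toReal_ofReal hq.le]
    have e : ∀ t : ℝ, ‖Real.exp (-|t|)‖ ^ q = Real.exp (-q * |t|) := by
      intro t
      rw [Real.norm_of_nonneg (Real.exp_pos _).le, ← Real.exp_mul]; ring_nf
    simp_rw [e]
    rw [← integrableOn_univ, ← Set.Iic_union_Ioi (a := (0:ℝ))]
    refine IntegrableOn.union ?_ ?_
    · refine (integrableOn_exp_mul_Iic hq 0).congr_fun (fun t ht => ?_) measurableSet_Iic
      simp only [abs_of_nonpos (Set.mem_Iic.1 ht)]; ring_nf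
    · refine (integrableOn_exp_mul_Ioi (neg_lt_zero.2 hq) 0).congr_fun (fun t ht => ?_) measurableSet_Ioi
      simp only [abs_of_pos (Set.mem_Ioi.1 ht)]
  exact hm.2.ne

/-- **Theorem (Lᵠ Berry–Esseen bound, Doeblin case).**
If `σ_n → ∞`, then for every `q > 0` one has `‖F_n − Φ‖_{L^q(dt)} = O(σ_n⁻¹)`:
there is a constant `C_q > 0` with `‖F_n − Φ‖_{L^q(dt)} ≤ C_q σ_n⁻¹` for all `n`. -/
theorem Lq_berry_esseen_doeblin
    (μ : Measure Ω) [IsProbabilityMeasure μ]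
    (X : ∀ j, Ω → 𝒳 j) (κ : ∀ j n, Kernel (𝒳 j) (𝒳 (j + n)))
    (hMarkov : IsInhomMarkov μ X κ)
    (n₀ : ℕ) (hn₀ : 0 < n₀) (γ : ℝ) (hγ : γ ∈ Set.Ioo (0 : ℝ) 1)
    (m : ∀ j, Measure (𝒳 j)) (hm : ∀ j, IsProbabilityMeasure (m j))
    (hDoeblin : ∀ j (x : 𝒳 j) (Γ : Set (𝒳 (j + n₀))), MeasurableSet Γ →
      ENNReal.ofReal γ * m (j + n₀) Γ ≤ κ j n₀ x Γ)
    (f : ∀ j, 𝒳 j → ℝ) (hfmeas : ∀ j, Measurable (f j))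
    (C : ℝ) (hbdd : ∀ j, ∀ᵐ ω ∂μ, |f j (X j ω)| ≤ C)
    (S : ℕ → Ω → ℝ) (hS : ∀ n ω, S n ω = ∑ j ∈ Finset.range n, f j (X j ω))
    (σs : ℕ → ℝ) (hσ : ∀ n, σs n = Real.sqrt (variance (S n) μ))
    (hσ_top : Tendsto σs atTop atTop)
    (F : ℕ → ℝ → ℝ)
    (hF : ∀ n t, F n t = (μ {ω | S n ω - ∫ ω', S n ω' ∂μ ≤ t * σs n}).toReal) :
    ∀ q : ℝ, 0 < q → ∃ Cq : ℝ, 0 < Cq ∧ ∀ n : ℕ,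
      eLpNorm (fun t => F n t - stdNormalCDF t) (ENNReal.ofReal q) volume
        ≤ ENNReal.ofReal Cq / ENNReal.ofReal (σs n) := by
  intro q hq
  -- centred summands
  set y : ℕ → Ω → ℂ := fun j ω => ((f j (X j ω) - ∫ ω', f j (X j ω') ∂μ : ℝ) : ℂ) with hy
  set V : ℕ → Ω → ℝ := fun n ω => S n ω - ∫ ω', S n ω' ∂μ with hVdef
  have hfm : ∀ j, Measurable fun ω => f j (X j ω) := fun j => (hfmeas j).comp (hMarkov.meas j)
  have hfi : ∀ j, Integrable (fun ω => f j (X j ω)) μ := fun j =>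
    Integrable.of_bound (hfm j).aestronglyMeasurable C (hbdd j)
  have hmean : ∀ j, |∫ ω', f j (X j ω') ∂μ| ≤ |C| := fun j => by
    have := norm_integral_le_of_norm_le_const (μ := μ) (f := fun ω => f j (X j ω)) (hbdd j)
    rw [Real.norm_eq_abs, probReal_univ, mul_one] at this
    exact this.trans (le_abs_self C)
  have hyB' : ∀ j, ∀ᵐ ω ∂μ, |f j (X j ω) - ∫ ω', f j (X j ω') ∂μ| ≤ 2 * |C| + 1 := fun j => by
    filter_upwards [hbdd j] with ω h
    have := abs_sub (f j (X j ω)) (∫ ω', f j (X j ω') ∂μ)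
    linarith [hmean j, le_abs_self C]
  have hyB : ∀ j, ∀ᵐ ω ∂μ, ‖y j ω‖ ≤ 2 * |C| + 1 := fun j => by
    filter_upwards [hyB' j] with ω h
    rw [hy]; simp only; rwa [Complex.norm_real, Real.norm_eq_abs]
  have hmy : ∀ j, AEStronglyMeasurable[MeasurableSpace.comap (X j) inferInstance] (y j) μ := fun j => by
    have h1 : Measurable fun x => ((f j x - ∫ ω', f j (X j ω') ∂μ : ℝ) : ℂ) :=
      Complex.measurable_ofReal.comp ((hfmeas j).sub_const _)
    have h2 : StronglyMeasurable[MeasurableSpace.comap (X j) inferInstance] (y j) :=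
      h1.stronglyMeasurable.comp_measurable (comap_measurable (X j))
    exact h2.aestronglyMeasurable
  have hyI : ∀ j, ∫ ω, y j ω ∂μ = 0 := fun j => by
    rw [hy]; simp only
    rw [integral_complex_ofReal, integral_sub (hfi j) (integrable_const _)]; simp
  have hSeq : ∀ n, S n = fun ω => ∑ j ∈ Finset.range n, f j (X j ω) := fun n => funext (hS n)
  have hES : ∀ n, ∫ ω', S n ω' ∂μ = ∑ j ∈ Finset.range n, ∫ ω', f j (X j ω') ∂μ := fun n => by
    rw [hSeq n, integral_finsetSum _ fun j _ => hfi j]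
  have hVsum : ∀ n ω, V n ω = ∑ j ∈ Finset.range n, (f j (X j ω) - ∫ ω', f j (X j ω') ∂μ) := by
    intro n ω
    rw [hVdef]; simp only
    rw [hES n, hS n ω, Finset.sum_sub_distrib]
  have hVy : ∀ n ω, ∑ j ∈ Finset.range n, y j ω = ((V n ω : ℝ) : ℂ) := by
    intro n ω
    rw [hVsum n ω, hy]; push_cast; rfl
  have hSm : ∀ n, Measurable (S n) := fun n => by
    rw [hSeq n]; exact Finset.measurable_fun_sum _ fun j _ => hfm j
  have hVm : ∀ n, Measurable (V n) := fun n => (hSm n).sub_const _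
  have hVB : ∀ n, ∀ᵐ ω ∂μ, |V n ω| ≤ n * (2 * |C| + 1) := fun n => by
    filter_upwards [ae_all_iff.2 hyB'] with ω h
    rw [hVsum n ω]
    refine (Finset.abs_sum_le_sum_abs _ _).trans ?_
    refine (Finset.sum_le_sum fun j _ => h j).trans ?_
    rw [Finset.sum_const, Finset.card_range, nsmul_eq_mul]
  have hSi : ∀ n, Integrable (S n) μ := fun n => by
    rw [hSeq n]; exact integrable_finsetSum _ fun j _ => hfi j
  have hV0 : ∀ n, ∫ ω, V n ω ∂μ = 0 := fun n => by
    rw [hVdef]; simp only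
    rw [integral_sub (hSi n) (integrable_const _)]; simp
  have hσ0 : ∀ n, 0 ≤ σs n := fun n => by rw [hσ n]; exact Real.sqrt_nonneg _
  have hvar : ∀ n, ∫ ω, V n ω ^ 2 ∂μ = σs n ^ 2 := fun n => by
    rw [hσ n, Real.sq_sqrt (variance_nonneg _ _), variance_eq_integral (hSm n).aemeasurable]
  have hC0 : 0 < 2 * |C| + 1 := by positivity
  set δ : ℝ := 1 / (432 * ((2 * |C| + 1) * (n₀ + 1 : ℕ) / γ)) with hδdef
  have hδ : 0 < δ := by have := hγ.1; rw [hδdef]; positivity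
  have hmix := mixData hMarkov n₀ γ hγ m hm hDoeblin
  have hWB : ∀ n, 0 < σs n → ∀ᵐ ω ∂μ, |V n ω / σs n| ≤ n * (2 * |C| + 1) / σs n := fun n hn => by
    filter_upwards [hVB n] with ω h
    rw [abs_div, abs_of_pos hn]; gcongr
  have hexp := fun n (hn : 0 < σs n) => exp_int_map ((hVm n).div_const (σs n)).aestronglyMeasurable (hWB n hn)
  have hnear : ∀ n, 0 < σs n → NearG (μ.map fun ω => V n ω / σs n) (δ * σs n) := by
    intro n hn
    obtain ⟨Λ, hd, hΛ⟩ := log_mgf hmix hγ n y (2 * |C| + 1) hmy hyB hC0 hyI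
    refine nearG_map (hVm n).aestronglyMeasurable (hVB n) (hV0 n) hδ Λ hd (fun z hz => ?_) hn (hvar n)
      (hexp n hn).1
    have := hΛ z hz
    simp only [hVy, Complex.norm_real, Real.norm_eq_abs, sq_abs] at this
    exact this
  have hFW : ∀ n, 0 < σs n → ∀ t, F n t = (μ.map fun ω => V n ω / σs n).real (Set.Iic t) := by
    intro n hn t
    rw [hF n t, map_measureReal_apply ((hVm n).div_const _) measurableSet_Iic, Measure.real]
    congr 2
    ext ω
    rw [Set.mem_preimage, Set.mem_Iic, div_le_iff₀ hn]; rfl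
  obtain ⟨K0, hK0, hclose⟩ := Iic_close
  have hsmall : ∀ n, ∃ B : ℝ, 0 ≤ B ∧ (0 < σs n → ∀ t, |F n t - stdNormalCDF t| ≤ B * Real.exp (-|t|)) := by
    intro n
    by_cases hn : 0 < σs n
    · have : IsProbabilityMeasure (μ.map fun ω => V n ω / σs n) := (hnear n hn).prob
      obtain ⟨B, hB0, hB⟩ := crude (hexp n hn).1 (hexp n hn).2
      refine ⟨B, hB0, fun _ t => ?_⟩
      rw [hFW n hn t]; exact hB t
    · exact ⟨0, le_rfl, fun h => absurd h hn⟩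
  choose Bn hBn0 hBn using hsmall
  obtain ⟨N, hN⟩ := eventually_atTop.1 (hσ_top.eventually_ge_atTop (160 / δ))
  set K : ℝ := K0 / δ + ∑ n ∈ Finset.range N, Bn n * σs n with hK
  have hsn : ∀ n ∈ Finset.range N, 0 ≤ Bn n * σs n := fun n _ => mul_nonneg (hBn0 n) (hσ0 n)
  have hKpos : 0 < K := add_pos_of_pos_of_nonneg (by positivity) (Finset.sum_nonneg hsn)
  have hmain : ∀ n, 0 < σs n → ∀ t, |F n t - stdNormalCDF t| ≤ K / σs n * Real.exp (-|t|) := by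
    intro n hn t
    rcases lt_or_ge n N with hnN | hnN
    · refine (hBn n hn t).trans ?_
      gcongr
      rw [le_div_iff₀ hn]
      have h1 := Finset.single_le_sum hsn (Finset.mem_range.2 hnN)
      have : 0 < K0 / δ := by positivity
      linarith
    · have h1 := hN n hnN
      rw [div_le_iff₀ hδ, mul_comm] at h1
      have h2 := hclose _ _ (hnear n hn) (hexp n hn).2 h1 t
      rw [hFW n hn t]
      refine h2.trans ?_
      have h3 : K0 / (δ * σs n) = K0 / δ / σs n := by rw [div_div]
      rw [h3]
      have := Finset.sum_nonneg hsn
      gcongr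
      linarith
  set E := eLpNorm (fun t : ℝ => Real.exp (-|t|)) (ENNReal.ofReal q) volume with hE
  have hEfin : E ≠ ∞ := lq_fin hq
  refine ⟨K * E.toReal + 1, by positivity, fun n => ?_⟩
  rcases (hσ0 n).eq_or_lt with h0 | hn
  · rw [← h0, ENNReal.ofReal_zero, ENNReal.div_zero]
    · exact le_top
    · rw [ne_eq, ENNReal.ofReal_eq_zero, not_le]; positivity
  · have h1 : eLpNorm (fun t => F n t - stdNormalCDF t) (ENNReal.ofReal q) volume ≤
        eLpNorm ((K / σs n) • fun t : ℝ => Real.exp (-|t|)) (ENNReal.ofReal q) volume :=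
      eLpNorm_mono_real fun t => by
        rw [Real.norm_eq_abs]; exact hmain n hn t
    refine h1.trans ?_
    rw [eLpNorm_const_smul, ← hE, Real.enorm_of_nonneg (by positivity), ← ENNReal.ofReal_div_of_pos hn,
      ← ENNReal.ofReal_toReal hEfin, ← ENNReal.ofReal_mul (by positivity)]
    apply ENNReal.ofReal_le_ofReal
    rw [ENNReal.toReal_ofReal ENNReal.toReal_nonneg, div_mul_eq_mul_div]
    gcongr
    linarith

end
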